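/- Let n ≥ 2 and k ≥ 0. Let X be the set of D-multidissections of P_{2n} with exactly k edges and let the cyclic group C = Z_{2n} act on X by D-rotation. Then the triple (X, C, X(q)) exhibits the cyclic sieving phenomenon, where X(q) = Σ_{ℓ=0}^{⌊k/2⌋} s_{(k−ℓ,ℓ)}(1, q², …, q^{2(n−1)})·h_{k−2ℓ}(1, q^n). Equivalently, for every d ≥ 0 the number of elements of X fixed by the d-th power of D-rotation equals X(ζ^d), where ζ = e^{πi/n} is a primitive 2n-th root of unity. -/

import Mathlib

/-!
Both sides are identified with the same count of pairs of rotation-invariant multisets on `ZMod n`.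

**Polygon side.** Orient each non-diameter edge clockwise along its shorter side, and record at each
vertex `v` the number `outW F v` of arcs starting at `v` plus blue radii at `v`, and the number
`inW F v` of arcs ending at `v` plus red radii at `v`. Both functions are antipodally invariant, and
`F ↦ (outW F, inW F)` is a bijection from D-multidissections onto all pairs `(A, B)` of antipodally
invariant functions (`exists_unique_of_weights`). Indeed, if a start is followed within less than a
half turn by an end, a closest such pair must be joined by an edge (`forced_edge`); removing this
edge and its antipode gives an induction. If there is no such pair, only diameters remain, blue ones
given by `A` and red ones by `B`. The bijection commutes with uncolored rotation, and the number of
edges is half the total of `A + B` (`two_mul_dEdges`). For even `d`, being fixed by the `d`-th power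
of D-rotation means that `A` and `B` are `d`-periodic (`dFixed_even`). For odd `d` the colors are
exchanged; since a blue and a red diameter cross unless they coincide, being fixed means in addition
that the blue and red multiplicities agree, that is, that `A` and `B` have the same total
(`dFixed_odd`).

**Counting.** Invariant multisets of size `m` on `ZMod n` are counted by `h_m(1, q², …, q^{2(n-1)})`
at `q = ζ^d` (`card_per`), by comparing generating functions: both are `(1 - t^r)^{-g}` with
`g = gcd(n, d)` and `r = n / g`.

**Sieving polynomial.** By the two-row Jacobi–Trudi identity, proved by exchanging tails
(`schur2_succ`), `s_{(k-l,l)} = h_{k-l} h_l - h_{k-l+1} h_{l-1}`. For even `d`, `h_{k-2l}(1, 1)` is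
`k - 2l + 1` and the sum becomes `∑_{a+b=k} h_a h_b` (`sieve_even`). For odd `d`, `h_{k-2l}(1, -1)` is
`1` or `0` according to the parity of `k`, and the sum telescopes to `h_{k/2}²` or vanishes
(`sieve_odd`). These are the counts of the pairs found above.
-/

open Finset

/-- Two chords `{i,j}` and `{a,b}` of a polygon whose vertices are labeled clockwise by
`ZMod m` (i.e. `0,1,…,m−1`) cross iff their endpoints strictly interleave in cyclic order:
writing the pairs in increasing order of labels as `{p,q}`, `{r,s}` with `p<q`, `r<s`,
they cross iff `p<r<q<s` or `r<p<s<q`. -/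
def crossE {m : ℕ} (i j a b : ZMod m) : Prop :=
  (min i.val j.val < min a.val b.val ∧ min a.val b.val < max i.val j.val ∧
     max i.val j.val < max a.val b.val) ∨
  (min a.val b.val < min i.val j.val ∧ min i.val j.val < max a.val b.val ∧
     max a.val b.val < max i.val j.val)

/-- `T` is a semistandard tableau of two-row shape `(a,b)` (with `b ≤ a` in intended use)
with entries in `Fin n` (i.e. entries at most `n`): both rows weakly increase and the
columns strictly increase. -/
def IsSSYT2 {n a b : ℕ} (T : (Fin a → Fin n) × (Fin b → Fin n)) : Prop :=
  (∀ i j : Fin a, i ≤ j → T.1 i ≤ T.1 j) ∧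
  (∀ i j : Fin b, i ≤ j → T.2 i ≤ T.2 j) ∧
  (∀ (i : Fin b) (h : (i : ℕ) < a), T.1 ⟨i, h⟩ < T.2 i)

open Classical in
/-- The Schur polynomial `s_{(a,b)}(x_1,…,x_n)` of a two-row shape, evaluated at
`x = (x_1,…,x_n)`: the sum over all semistandard tableaux of shape `(a,b)` with entries
at most `n` of the products of the variables indexed by the entries. -/
noncomputable def schur2 {R : Type*} [CommSemiring R] (n a b : ℕ) (x : Fin n → R) : R :=
  ∑ T : (Fin a → Fin n) × (Fin b → Fin n),
    if IsSSYT2 T then (∏ p, x (T.1 p)) * ∏ p, x (T.2 p) else 0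

open Classical in
/-- The complete homogeneous symmetric polynomial `h_k(x_1,…,x_n)` evaluated at
`x = (x_1,…,x_n)`: the sum over weakly increasing sequences `1 ≤ i_1 ≤ ⋯ ≤ i_k ≤ n`
of `x_{i_1} ⋯ x_{i_k}`. -/
noncomputable def hh {R : Type*} [CommSemiring R] (n k : ℕ) (x : Fin n → R) : R :=
  ∑ T : Fin k → Fin n,
    if (∀ i j : Fin k, i ≤ j → T i ≤ T j) then ∏ p, x (T p) else 0

/-- The data of a D-multidissection of `P_{2n}` (vertices labeled clockwise by
`ZMod (2n)`): a multiplicity function on centrally symmetric pairs of non-diameter edges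
(encoded as a symmetric antipodally invariant function `F.1` on edges), a multiplicity
function `F.2.1` on blue diameters (the diameter `{a, a+n}` indexed by `a`, antipodally
invariantly) and a multiplicity function `F.2.2` on red diameters. -/
abbrev DTriple (n : ℕ) :=
  (ZMod (2*n) → ZMod (2*n) → ℕ) × (ZMod (2*n) → ℕ) × (ZMod (2*n) → ℕ)

/-- `F` is a D-multidissection: the underlying multiplicities are symmetric/antipodally
invariant, supported away from loops and diameters (for the pair part), and no two
D-edges of nonzero multiplicity cross.  Here distinct diameters of the same color never
cross, the same diameter in both colors does not cross itself, distinct diameters of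
different colors always cross, and all other crossings are classical. -/
def IsDMulti (n : ℕ) (F : DTriple n) : Prop :=
  (∀ i j, F.1 i j = F.1 j i) ∧ (∀ i, F.1 i i = 0) ∧
  (∀ i, F.1 i (i + (n : ZMod (2*n))) = 0) ∧
  (∀ i j, F.1 (i + (n : ZMod (2*n))) (j + (n : ZMod (2*n))) = F.1 i j) ∧
  (∀ a, F.2.1 (a + (n : ZMod (2*n))) = F.2.1 a) ∧
  (∀ a, F.2.2 (a + (n : ZMod (2*n))) = F.2.2 a) ∧
  (∀ i j a b, crossE i j a b → F.1 i j = 0 ∨ F.1 a b = 0) ∧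
  (∀ a i j, crossE a (a + (n : ZMod (2*n))) i j → F.2.1 a = 0 ∨ F.1 i j = 0) ∧
  (∀ a i j, crossE a (a + (n : ZMod (2*n))) i j → F.2.2 a = 0 ∨ F.1 i j = 0) ∧
  (∀ a b, F.2.1 a ≠ 0 → F.2.2 b ≠ 0 → b = a ∨ b = a + (n : ZMod (2*n)))

/-- The number of edges of a D-multidissection: each centrally symmetric pair of
non-diameter edges counts as two edges (so the sum of `F.1` over all edges) and each
colored diameter counts as one edge. -/
def dEdges (n : ℕ) (F : DTriple n) : ℕ :=
  (∑ i ∈ Finset.range (2*n), ∑ j ∈ Finset.range (2*n),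
    if i < j then F.1 (i : ZMod (2*n)) (j : ZMod (2*n)) else 0) +
  ∑ a ∈ Finset.range n, (F.2.1 (a : ZMod (2*n)) + F.2.2 (a : ZMod (2*n)))

/-- `F` is fixed by the `d`-th power of D-rotation (rotation by one vertex position
which additionally switches the colors of diameters). -/
def DFixed (n d : ℕ) (F : DTriple n) : Prop :=
  (∀ i j, F.1 (i + (d : ZMod (2*n))) (j + (d : ZMod (2*n))) = F.1 i j) ∧
  (∀ a, F.2.1 (a + (d : ZMod (2*n))) = if d % 2 = 0 then F.2.1 a else F.2.2 a) ∧
  (∀ a, F.2.2 (a + (d : ZMod (2*n))) = if d % 2 = 0 then F.2.2 a else F.2.1 a)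

/-! ### Complete homogeneous polynomials -/

theorem hh_zero {R : Type*} [CommSemiring R] (n : ℕ) (x : Fin n → R) : hh n 0 x = 1 := by
  simp [hh]

theorem hh_empty {R : Type*} [CommSemiring R] (a : ℕ) (x : Fin 0 → R) : hh 0 (a + 1) x = 0 := by
  simp [hh]

/-- Sort the weakly increasing sequences by whether they start with the smallest letter. -/
theorem hh_rec {R : Type*} [CommSemiring R] (n a : ℕ) (x : Fin (n + 1) → R) :
    hh (n + 1) (a + 1) x = x 0 * hh (n + 1) a x + hh n (a + 1) (fun i => x i.succ) := by
  classical
  have mono_cons : ∀ (T : Fin a → Fin (n + 1)),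
      (∀ i j : Fin (a + 1), i ≤ j →
        (Fin.cons 0 T : Fin (a + 1) → Fin (n + 1)) i ≤
          (Fin.cons 0 T : Fin (a + 1) → Fin (n + 1)) j) ↔
      (∀ i j : Fin a, i ≤ j → T i ≤ T j) := by
    intro T
    constructor
    · intro h i j hij
      simpa using h i.succ j.succ (Fin.succ_le_succ_iff.2 hij)
    · intro h i j hij
      induction i using Fin.cases with
      | zero => simp
      | succ i =>
        induction j using Fin.cases with
        | zero => simp at hij
        | succ j => simpa using h i j (Fin.succ_le_succ_iff.1 hij)
  unfold hh
  rw [Finset.mul_sum]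
  have split : ∀ T : Fin (a + 1) → Fin (n + 1),
      (if (∀ i j : Fin (a + 1), i ≤ j → T i ≤ T j) then ∏ p, x (T p) else 0) =
      (if T 0 = 0 then
        (if (∀ i j : Fin (a + 1), i ≤ j → T i ≤ T j) then ∏ p, x (T p) else 0) else 0) +
      (if T 0 ≠ 0 then
        (if (∀ i j : Fin (a + 1), i ≤ j → T i ≤ T j) then ∏ p, x (T p) else 0) else 0) := by
    intro T; by_cases h : T 0 = 0 <;> simp [h]
  rw [Finset.sum_congr rfl (fun T _ => split T), Finset.sum_add_distrib]
  congr 1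
  · symm
    refine Fintype.sum_of_injective
      (fun T : Fin a → Fin (n + 1) => (Fin.cons 0 T : Fin (a + 1) → Fin (n + 1)))
      (fun S T h => by simpa using h) _ _ ?_ ?_
    · intro T hT
      rw [if_neg]
      intro h0
      exact hT ⟨Fin.tail T, by rw [← h0]; exact Fin.cons_self_tail T⟩
    · intro T
      simp only [Fin.cons_zero, if_true, mono_cons, Fin.prod_univ_succ, Fin.cons_succ, mul_ite,
        mul_zero]
  · symm
    refine Fintype.sum_of_injective
      (fun T : Fin (a + 1) → Fin n => fun i => (T i).succ)
      (fun S T h => by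
        funext i; exact Fin.succ_injective _ (congrFun h i)) _ _ ?_ ?_
    · intro T hT
      by_cases h0 : T 0 ≠ 0
      · rw [if_pos h0, if_neg]
        intro hm
        have hne : ∀ i, T i ≠ 0 := fun i hi =>
          h0 (Fin.le_zero_iff.1 (hi ▸ hm 0 i (Fin.zero_le _)))
        exact hT ⟨fun i => (T i).pred (hne i), by funext i; simp⟩
      · rw [if_neg h0]
    · intro T
      simp [Fin.succ_le_succ_iff]

open PowerSeries in
/-- Generating function of the complete homogeneous polynomials: `∑ h_a t^a = ∏ (1 - x_i t)⁻¹`. -/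
theorem hh_genfun {R : Type*} [CommRing R] (n : ℕ) (x : Fin n → R) :
    PowerSeries.mk (fun a => hh n a x) * ∏ i, (1 - C (x i) * X) = 1 := by
  induction n with
  | zero =>
    ext a
    cases a with
    | zero => simp [hh_zero]
    | succ a => simp [hh_empty, PowerSeries.coeff_one]
  | succ n ih =>
    have h : PowerSeries.mk (fun a => hh (n + 1) a x) * (1 - C (x 0) * X) =
        PowerSeries.mk (fun a => hh n a (fun i => x i.succ)) := by
      have e : PowerSeries.mk (fun a => hh (n + 1) a x) * (1 - C (x 0) * X) =
        PowerSeries.mk (fun a => hh (n + 1) a x) -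
          C (x 0) * (X * PowerSeries.mk (fun a => hh (n + 1) a x)) := by ring
      rw [e]
      ext a
      cases a with
      | zero => simp [hh_zero]
      | succ a => simp [coeff_succ_X_mul, hh_rec]
    rw [Fin.prod_univ_succ, ← mul_assoc, h, ih]

theorem hh_one {R : Type*} [CommSemiring R] (a : ℕ) (x : Fin 1 → R) : hh 1 a x = x 0 ^ a := by
  induction a with
  | zero => simp [hh_zero]
  | succ a ih => rw [hh_rec, hh_empty, ih, add_zero, pow_succ']

theorem hh_two {R : Type*} [CommSemiring R] (a : ℕ) (x : Fin 2 → R) (h0 : x 0 = 1) :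
    hh 2 a x = ∑ j ∈ Finset.range (a + 1), x 1 ^ j := by
  induction a with
  | zero => simp [hh_zero]
  | succ a ih =>
    rw [hh_rec, hh_one, ih, h0, one_mul, Finset.sum_range_succ _ (a + 1)]
    rfl

/-! ### The two-row Jacobi–Trudi identity -/

/-- The tail exchange at column `p`, on cells. The first row of the shape `(a+1,b)` corresponds to
the second row of the shape `(a,b+1)` up to and including column `p`, followed by its first row
from column `p` on; the second row of `(a+1,b)` corresponds to the rest. -/
def tailEquiv {a b : ℕ} (h : b + 1 ≤ a) (p : Fin (b + 1)) :
    Fin (a + 1) ⊕ Fin b ≃ Fin a ⊕ Fin (b + 1) where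
  toFun := Sum.elim
    (fun j => if hj : (j : ℕ) ≤ p then Sum.inr ⟨j, by omega⟩ else Sum.inl ⟨j - 1, by omega⟩)
    (fun j => if hj : (j : ℕ) < p then Sum.inl ⟨j, by omega⟩ else Sum.inr ⟨j + 1, by omega⟩)
  invFun := Sum.elim
    (fun j => if hj : (j : ℕ) < p then Sum.inr ⟨j, by omega⟩ else Sum.inl ⟨j + 1, by omega⟩)
    (fun j => if hj : (j : ℕ) ≤ p then Sum.inl ⟨j, by omega⟩ else Sum.inr ⟨j - 1, by omega⟩)
  left_inv := by
    rintro (j | j)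
    · by_cases hj : (j : ℕ) ≤ p
      · simp [hj, -Fin.val_fin_le, -Fin.val_fin_lt]
      · have : ¬ ((j : ℕ) - 1 < p) := by omega
        simp only [Sum.elim_inl, hj, this, dite_false, Sum.inl.injEq, Fin.ext_iff]; omega
    · by_cases hj : (j : ℕ) < p
      · simp [hj, -Fin.val_fin_le, -Fin.val_fin_lt]
      · have : ¬ ((j : ℕ) + 1 ≤ p) := by omega
        simp [hj, this, -Fin.val_fin_le, -Fin.val_fin_lt]
  right_inv := by
    rintro (j | j)
    · by_cases hj : (j : ℕ) < p
      · simp [hj, -Fin.val_fin_le, -Fin.val_fin_lt]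
      · have : ¬ ((j : ℕ) + 1 ≤ p) := by omega
        simp [hj, this, -Fin.val_fin_le, -Fin.val_fin_lt]
    · by_cases hj : (j : ℕ) ≤ p
      · simp [hj, -Fin.val_fin_le, -Fin.val_fin_lt]
      · have : ¬ ((j : ℕ) - 1 < p) := by omega
        simp only [Sum.elim_inr, hj, this, dite_false, Sum.inr.injEq, Fin.ext_iff]; omega

/-- Fillings of shape `(a,b+1)` with weakly increasing rows in which `p` is the first column that
is not strictly increasing. -/
def FirstBad {n a b : ℕ} (h : b + 1 ≤ a) (p : Fin (b + 1))
    (T : (Fin a → Fin n) × (Fin (b + 1) → Fin n)) : Prop :=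
  (∀ i j : Fin a, i ≤ j → T.1 i ≤ T.1 j) ∧ (∀ i j : Fin (b + 1), i ≤ j → T.2 i ≤ T.2 j) ∧
  (∀ j : Fin (b + 1), j < p → T.1 ⟨j, by omega⟩ < T.2 j) ∧ T.2 p ≤ T.1 ⟨p, by omega⟩

/-- Fillings of shape `(a+1,b)` with weakly increasing rows in which `p` is the first column whose
second-row entry is at least its first-row entry, with `p = b` if there is no such column. -/
def FirstGood {n a b : ℕ} (h : b + 1 ≤ a) (p : Fin (b + 1))
    (U : (Fin (a + 1) → Fin n) × (Fin b → Fin n)) : Prop :=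
  (∀ i j : Fin (a + 1), i ≤ j → U.1 i ≤ U.1 j) ∧ (∀ i j : Fin b, i ≤ j → U.2 i ≤ U.2 j) ∧
  (∀ j : Fin b, (j : ℕ) < p → U.2 j < U.1 ⟨j, by omega⟩) ∧
  (∀ hp : (p : ℕ) < b, U.1 ⟨p, by omega⟩ ≤ U.2 ⟨p, hp⟩)

/-- Tail exchange on fillings. -/
def tailSwap {n a b : ℕ} (h : b + 1 ≤ a) (p : Fin (b + 1)) :
    (Fin a → Fin n) × (Fin (b + 1) → Fin n) ≃ (Fin (a + 1) → Fin n) × (Fin b → Fin n) :=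
  ((Equiv.sumArrowEquivProdArrow _ _ _).symm.trans
    (Equiv.arrowCongr (tailEquiv h p).symm (Equiv.refl _))).trans
    (Equiv.sumArrowEquivProdArrow _ _ _)

theorem tailSwap_fst {n a b : ℕ} (h : b + 1 ≤ a) (p : Fin (b + 1))
    (T : (Fin a → Fin n) × (Fin (b + 1) → Fin n)) (j : Fin (a + 1)) :
    (tailSwap h p T).1 j = if hj : (j : ℕ) ≤ p then T.2 ⟨j, by omega⟩
      else T.1 ⟨j - 1, by omega⟩ := by
  by_cases hj : (j : ℕ) ≤ p <;>
    simp [tailSwap, tailEquiv, Equiv.sumArrowEquivProdArrow, Equiv.arrowCongr, hj]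

theorem tailSwap_snd {n a b : ℕ} (h : b + 1 ≤ a) (p : Fin (b + 1))
    (T : (Fin a → Fin n) × (Fin (b + 1) → Fin n)) (j : Fin b) :
    (tailSwap h p T).2 j = if _hj : (j : ℕ) < p then T.1 ⟨j, by omega⟩
      else T.2 ⟨j + 1, by omega⟩ := by
  by_cases hj : (j : ℕ) < p <;>
    simp [tailSwap, tailEquiv, Equiv.sumArrowEquivProdArrow, Equiv.arrowCongr, hj]

theorem tailSwap_weight {R : Type*} [CommSemiring R] {n a b : ℕ} (x : Fin n → R)
    (h : b + 1 ≤ a) (p : Fin (b + 1)) (T : (Fin a → Fin n) × (Fin (b + 1) → Fin n)) :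
    (∏ j, x ((tailSwap h p T).1 j)) * ∏ j, x ((tailSwap h p T).2 j) =
      (∏ j, x (T.1 j)) * ∏ j, x (T.2 j) := by
  have e1 : ∀ {c d : ℕ} (V : (Fin c → Fin n) × (Fin d → Fin n)),
      (∏ j, x (V.1 j)) * ∏ j, x (V.2 j) = ∏ s : Fin c ⊕ Fin d, x (Sum.elim V.1 V.2 s) := by
    intro c d V
    simp
  rw [e1, e1, ← Equiv.prod_comp (tailEquiv h p)]
  refine Finset.prod_congr rfl fun s _ => ?_
  congr 1
  rcases s with j | j <;>
    simp [tailSwap, Equiv.sumArrowEquivProdArrow, Equiv.arrowCongr]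

/-- Exchanging tails at the first violation turns a filling of shape `(a,b+1)` that is not
semistandard into a filling of shape `(a+1,b)` with weakly increasing rows, and every such filling
arises exactly once. -/
theorem tailSwap_iff {n a b : ℕ} (h : b + 1 ≤ a) (p : Fin (b + 1))
    (T : (Fin a → Fin n) × (Fin (b + 1) → Fin n)) :
    FirstBad h p T ↔ FirstGood h p (tailSwap h p T) := by
  unfold FirstBad FirstGood
  simp only [tailSwap_fst, tailSwap_snd]
  obtain ⟨T1, T2⟩ := T
  dsimp only
  constructor
  · rintro ⟨m1, m2, hl, hp⟩
    refine ⟨?_, ?_, ?_, ?_⟩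
    · intro i j hij
      have hij' : (i : ℕ) ≤ j := hij
      split_ifs with h1 h2 h2
      · exact m2 ⟨i, by omega⟩ ⟨j, by omega⟩ hij
      · calc T2 ⟨i, _⟩ ≤ T2 p := m2 _ _ h1
          _ ≤ T1 ⟨p, by omega⟩ := hp
          _ ≤ _ := m1 _ _ (Fin.le_def.2 (by dsimp only; omega))
      · omega
      · exact m1 _ _ (Fin.le_def.2 (by dsimp only; omega))
    · intro i j hij
      have hij' : (i : ℕ) ≤ j := hij
      split_ifs with h1 h2 h2
      · exact m1 ⟨i, by omega⟩ ⟨j, by omega⟩ hij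
      · exact (hl ⟨i, by omega⟩ h1).le.trans (m2 _ _ (Fin.le_def.2 (by dsimp only; omega)))
      · omega
      · exact m2 _ _ (Fin.le_def.2 (by dsimp only; omega))
    · intro j hj
      rw [dif_pos hj, dif_pos hj.le]
      exact hl ⟨j, by omega⟩ hj
    · intro hp'
      simp only [le_refl, dite_true, lt_irrefl, dite_false]
      exact m2 _ _ (Fin.le_def.2 (by dsimp only; omega))
  · rintro ⟨m1, m2, hl, hp⟩
    refine ⟨?_, ?_, ?_, ?_⟩
    · intro i j hij
      have hij' : (i : ℕ) ≤ j := hij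
      by_cases hi : (i : ℕ) < p
      · by_cases hj : (j : ℕ) < p
        · simpa [hi, hj] using m2 ⟨i, by omega⟩ ⟨j, by omega⟩ hij
        · have e1 := hl ⟨i, by omega⟩ hi
          have e2 := m1 ⟨i, by omega⟩ ⟨j + 1, by omega⟩ (Fin.le_def.2 (by dsimp only; omega))
          have hj2 : ¬ ((j : ℕ) + 1 ≤ p) := by omega
          simp only [hi, hi.le, hj2, dite_true, dite_false] at e1 e2
          exact e1.le.trans e2
      · have hi2 : ¬ ((i : ℕ) + 1 ≤ p) := by omega
        have hj2 : ¬ ((j : ℕ) + 1 ≤ p) := by omega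
        have e2 := m1 ⟨i + 1, by omega⟩ ⟨j + 1, by omega⟩ (Fin.le_def.2 (by dsimp only; omega))
        simpa [hi2, hj2] using e2
    · intro i j hij
      have hij' : (i : ℕ) ≤ j := hij
      by_cases hj : (j : ℕ) ≤ p
      · have hi : (i : ℕ) ≤ p := by omega
        simpa [hi, hj] using m1 ⟨i, by omega⟩ ⟨j, by omega⟩ hij
      · have key : ∀ q : Fin (b + 1), (p : ℕ) < q → q ≤ j → T2 q ≤ T2 j := by
          intro q hq hqj
          have hqj' : (q : ℕ) ≤ j := hqj
          have e := m2 ⟨q - 1, by omega⟩ ⟨j - 1, by omega⟩ (Fin.le_def.2 (by dsimp only; omega))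
          have h1 : ¬ ((q : ℕ) - 1 < p) := by omega
          have h2 : ¬ ((j : ℕ) - 1 < p) := by omega
          simp only [h1, h2, dite_false] at e
          convert e using 3 <;> omega
        by_cases hi : (i : ℕ) ≤ p
        · have e1 := hp (by omega)
          simp only [le_refl, dite_true, lt_irrefl, dite_false] at e1
          have e2 := m1 ⟨i, by omega⟩ ⟨p, by omega⟩ hi
          simp only [hi, le_refl, dite_true] at e2
          exact e2.trans (e1.trans (key ⟨p + 1, by omega⟩ (by simp)
            (Fin.le_def.2 (by dsimp only; omega))))
        · exact key i (by omega) hij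
    · intro j hj
      have hj' : (j : ℕ) < p := hj
      have e1 := hl ⟨j, by omega⟩ hj'
      simpa [hj', hj'.le] using e1
    · have e := m1 ⟨p, by omega⟩ ⟨p + 1, by omega⟩ (Fin.le_def.2 (by dsimp only; omega))
      simpa using e

theorem sum_ite_unique {R : Type*} [AddCommMonoid R] {b : ℕ} (P : Fin (b + 1) → Prop)
    (Q : Prop) [DecidablePred P] [Decidable Q] (w : R) (hQ : Q ↔ ∃ p, P p)
    (huniq : ∀ p q, P p → P q → p = q) :
    (if Q then w else 0) = ∑ p, if P p then w else 0 := by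
  by_cases h : Q
  · obtain ⟨p, hp⟩ := hQ.1 h
    rw [if_pos h, Finset.sum_eq_single p, if_pos hp]
    · intro q _ hq
      rw [if_neg (fun h' => hq (huniq _ _ h' hp))]
    · simp
  · rw [if_neg h, Finset.sum_eq_zero]
    intro p _
    rw [if_neg (fun hp => h (hQ.2 ⟨p, hp⟩))]

/-- A product `h_a h_b` enumerates two-row fillings in which only the rows are constrained. -/
theorem hh_mul {R : Type*} [CommSemiring R] (n a b : ℕ) (x : Fin n → R) [DecidablePred
      fun T : (Fin a → Fin n) × (Fin b → Fin n) =>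
        (∀ i j : Fin a, i ≤ j → T.1 i ≤ T.1 j) ∧ (∀ i j : Fin b, i ≤ j → T.2 i ≤ T.2 j)] :
    hh n a x * hh n b x = ∑ T : (Fin a → Fin n) × (Fin b → Fin n),
      if (∀ i j : Fin a, i ≤ j → T.1 i ≤ T.1 j) ∧ (∀ i j : Fin b, i ≤ j → T.2 i ≤ T.2 j)
      then (∏ p, x (T.1 p)) * ∏ p, x (T.2 p) else 0 := by
  classical
  unfold hh
  rw [Finset.sum_mul_sum, Fintype.sum_prod_type]
  refine Finset.sum_congr rfl fun S _ => Finset.sum_congr rfl fun T _ => ?_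
  by_cases h1 : (∀ i j : Fin a, i ≤ j → S i ≤ S j)
  · by_cases h2 : (∀ i j : Fin b, i ≤ j → T i ≤ T j)
    · rw [if_pos h1, if_pos h2, if_pos ⟨h1, h2⟩]
    · rw [if_neg h2, mul_zero, if_neg]
      exact fun h => h2 h.2
  · rw [if_neg h1, zero_mul, if_neg]
    exact fun h => h1 h.1

theorem schur2_zero {R : Type*} [CommSemiring R] (n a : ℕ) (x : Fin n → R) :
    schur2 n a 0 x = hh n a x := by
  classical
  have := hh_mul n a 0 x
  rw [hh_zero, mul_one] at this
  rw [this]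
  unfold schur2 IsSSYT2
  refine Finset.sum_congr rfl fun T _ => ?_
  have e : (∀ (i : Fin 0) (h : (i : ℕ) < a), T.1 ⟨i, h⟩ < T.2 i) := fun i => i.elim0
  simp [e]

/-- The two-row Jacobi–Trudi identity
`h_a h_{b+1} = s_{(a,b+1)} + h_{a+1} h_b`. -/
theorem schur2_succ {R : Type*} [CommSemiring R] (n a b : ℕ) (h : b + 1 ≤ a) (x : Fin n → R) :
    schur2 n a (b + 1) x + hh n (a + 1) x * hh n b x = hh n a x * hh n (b + 1) x := by
  classical
  have hbad : ∀ T : (Fin a → Fin n) × (Fin (b + 1) → Fin n),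
      (if (∀ i j : Fin a, i ≤ j → T.1 i ≤ T.1 j) ∧
        (∀ i j : Fin (b + 1), i ≤ j → T.2 i ≤ T.2 j)
        then (∏ p, x (T.1 p)) * ∏ p, x (T.2 p) else 0) =
      (if IsSSYT2 T then (∏ p, x (T.1 p)) * ∏ p, x (T.2 p) else 0) +
      ∑ p, if FirstBad h p T then (∏ p, x (T.1 p)) * ∏ p, x (T.2 p) else 0 := by
    intro T
    rw [← sum_ite_unique (fun p => FirstBad h p T)
      (((∀ i j : Fin a, i ≤ j → T.1 i ≤ T.1 j) ∧
        (∀ i j : Fin (b + 1), i ≤ j → T.2 i ≤ T.2 j)) ∧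
        ∃ p : Fin (b + 1), T.2 p ≤ T.1 ⟨p, by omega⟩)]
    · by_cases hm : (∀ i j : Fin a, i ≤ j → T.1 i ≤ T.1 j) ∧
        (∀ i j : Fin (b + 1), i ≤ j → T.2 i ≤ T.2 j)
      · by_cases hs : ∃ p : Fin (b + 1), T.2 p ≤ T.1 ⟨p, by omega⟩
        · rw [if_pos hm, if_neg, if_pos ⟨hm, hs⟩, zero_add]
          rintro ⟨-, -, h3⟩
          obtain ⟨p, hp⟩ := hs
          exact absurd (h3 p (by omega)) (not_lt.2 hp)
        · rw [if_pos hm, if_pos, if_neg (fun h' => hs h'.2), add_zero]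
          push Not at hs
          exact ⟨hm.1, hm.2, fun i hi => hs i⟩
      · rw [if_neg hm, if_neg (fun h' => hm ⟨h'.1, h'.2.1⟩), if_neg (fun h' => hm h'.1), add_zero]
    · constructor
      · rintro ⟨⟨m1, m2⟩, hs⟩
        obtain ⟨p, hp, hmin⟩ := WellFounded.has_min (wellFounded_lt (α := Fin (b + 1)))
          {p | T.2 p ≤ T.1 ⟨p, by omega⟩} hs
        exact ⟨p, m1, m2, fun j hj => lt_of_not_ge fun hge => hmin j hge hj, hp⟩
      · rintro ⟨p, m1, m2, -, hp⟩
        exact ⟨⟨m1, m2⟩, p, hp⟩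
    · rintro p q ⟨-, -, hp1, hp2⟩ ⟨-, -, hq1, hq2⟩
      rcases lt_trichotomy p q with hpq | hpq | hpq
      · exact absurd (hq1 p hpq) (not_lt.2 hp2)
      · exact hpq
      · exact absurd (hp1 q hpq) (not_lt.2 hq2)
  have hgood : ∀ U : (Fin (a + 1) → Fin n) × (Fin b → Fin n),
      (if (∀ i j : Fin (a + 1), i ≤ j → U.1 i ≤ U.1 j) ∧
        (∀ i j : Fin b, i ≤ j → U.2 i ≤ U.2 j)
        then (∏ p, x (U.1 p)) * ∏ p, x (U.2 p) else 0) =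
      ∑ p, if FirstGood h p U then (∏ p, x (U.1 p)) * ∏ p, x (U.2 p) else 0 := by
    intro U
    refine sum_ite_unique (fun p => FirstGood h p U) _ ((∏ p, x (U.1 p)) * ∏ p, x (U.2 p)) ?_ ?_
    · constructor
      · rintro ⟨m1, m2⟩
        obtain ⟨p, hp, hmin⟩ := WellFounded.has_min (wellFounded_lt (α := Fin (b + 1)))
          {p | ∀ hp : (p : ℕ) < b, U.1 ⟨p, by omega⟩ ≤ U.2 ⟨p, hp⟩}
          ⟨Fin.last b, fun hp => absurd hp (by simp)⟩
        refine ⟨p, m1, m2, fun j hj => lt_of_not_ge fun hge => ?_, hp⟩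
        exact hmin ⟨j, by omega⟩ (fun _ => hge) hj
      · rintro ⟨p, m1, m2, -⟩
        exact ⟨m1, m2⟩
    · rintro p q ⟨-, -, hp1, hp2⟩ ⟨-, -, hq1, hq2⟩
      rcases lt_trichotomy p q with hpq | hpq | hpq
      · exact absurd (hq1 ⟨p, by omega⟩ hpq) (not_lt.2 (hp2 (by omega)))
      · exact hpq
      · exact absurd (hp1 ⟨q, by omega⟩ hpq) (not_lt.2 (hq2 (by omega)))
  rw [hh_mul, hh_mul, Finset.sum_congr rfl (fun T _ => hbad T),
    Finset.sum_congr rfl (fun U _ => hgood U), Finset.sum_add_distrib]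
  unfold schur2
  congr 1
  rw [Finset.sum_comm, Finset.sum_comm
    (s := (Finset.univ : Finset ((Fin a → Fin n) × (Fin (b + 1) → Fin n))))]
  refine Finset.sum_congr rfl fun p _ => (Fintype.sum_equiv (tailSwap h p) _ _ fun T => ?_).symm
  rw [tailSwap_weight]
  exact if_congr (tailSwap_iff h p T) rfl rfl

/-! ### Values of the sieving polynomial -/

/-- Summing the Jacobi–Trudi identity telescopes. -/
theorem schur2_telescope {R : Type*} [CommRing R] (n k : ℕ) (x : Fin n → R) (m : ℕ)
    (hm : 2 * m ≤ k) :
    ∑ l ∈ Finset.range (m + 1), schur2 n (k - l) l x = hh n (k - m) x * hh n m x := by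
  induction m with
  | zero => simp [schur2_zero, hh_zero]
  | succ m ih =>
    rw [Finset.sum_range_succ, ih (by omega)]
    have h := schur2_succ n (k - (m + 1)) m (by omega) x
    rw [show k - (m + 1) + 1 = k - m by omega] at h
    rw [← h]; ring

/-- Summation by parts, kept in a form suited to induction. -/
theorem schur2_weighted_partial {R : Type*} [CommRing R] (n k : ℕ) (x : Fin n → R) (m : ℕ)
    (hm : 2 * m ≤ k) :
    ∑ l ∈ Finset.range (m + 1), schur2 n (k - l) l x * ((k - 2 * l + 1 : ℕ) : R) =
      ((k - 2 * m : ℕ) : R) * (hh n (k - m) x * hh n m x) +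
      ∑ l ∈ Finset.range (m + 1), hh n (k - l) x * hh n l x +
      ∑ l ∈ Finset.range m, hh n (k - l) x * hh n l x := by
  induction m with
  | zero => simp [schur2_zero, hh_zero]; ring
  | succ m ih =>
    rw [Finset.sum_range_succ, ih (by omega),
      Finset.sum_range_succ (fun l => hh n (k - l) x * hh n l x) (m + 1),
      Finset.sum_range_succ (fun l => hh n (k - l) x * hh n l x) m]
    have h := schur2_succ n (k - (m + 1)) m (by omega) x
    rw [show k - (m + 1) + 1 = k - m by omega] at h
    rw [eq_sub_of_add_eq h]
    obtain ⟨c, hc⟩ : ∃ c, k = 2 * (m + 1) + c := ⟨k - 2 * (m + 1), by omega⟩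
    rw [show k - 2 * m = c + 2 by omega, show k - 2 * (m + 1) = c by omega]
    push_cast
    ring

/-- The weights `k - 2l + 1` unfold to the full convolution `∑ h_a h_b` over `a + b = k`, in which
the pairs `(k-l, l)` and `(l, k-l)` both occur. -/
theorem schur2_weighted {R : Type*} [CommRing R] (n k : ℕ) (x : Fin n → R) :
    ∑ l ∈ Finset.range (k / 2 + 1), schur2 n (k - l) l x * ((k - 2 * l + 1 : ℕ) : R) =
      ∑ p ∈ HasAntidiagonal.antidiagonal k, hh n p.1 x * hh n p.2 x := by
  rw [schur2_weighted_partial n k x (k / 2) (by omega),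
    Finset.Nat.sum_antidiagonal_eq_sum_range_succ (fun i j => hh n i x * hh n j x)]
  set m := k / 2 with hm
  have e : ∑ i ∈ Finset.range (k + 1), hh n i x * hh n (k - i) x =
      ∑ i ∈ Finset.range (m + 1), hh n (k - i) x * hh n i x +
      ∑ i ∈ Finset.range (k - m), hh n (k - i) x * hh n i x := by
    rw [show k + 1 = (m + 1) + (k - m) by omega, Finset.sum_range_add]
    congr 1
    · exact Finset.sum_congr rfl fun i _ => mul_comm _ _
    · rw [← Finset.sum_range_reflect]
      refine Finset.sum_congr rfl fun i hi => ?_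
      have hi' := Finset.mem_range.1 hi
      rw [show m + 1 + (k - m - 1 - i) = k - i by omega, show k - (k - i) = i by omega]
  rw [e]
  rcases Nat.even_or_odd' k with ⟨c, hc | hc⟩
  · rw [show k - 2 * m = 0 by omega, show k - m = m by omega]
    simp
  · rw [show k - 2 * m = 1 by omega, show Finset.range (k - m) = Finset.range (m + 1) by
      congr 1; omega, Finset.sum_range_succ (fun l => hh n (k - l) x * hh n l x) m]
    push_cast
    ring

theorem sum_neg_one_pow {R : Type*} [CommRing R] (m : ℕ) :
    ∑ j ∈ Finset.range (m + 1), (-1 : R) ^ j = if Even m then 1 else 0 := by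
  induction m with
  | zero => simp
  | succ m ih =>
    rw [Finset.sum_range_succ, ih]
    by_cases h : Even m
    · have h' : ¬ Even (m + 1) := by rwa [Nat.even_add_one, not_not]
      rw [if_pos h, if_neg h', Odd.neg_one_pow (Nat.not_even_iff_odd.1 h')]; ring
    · have h' : Even (m + 1) := by rwa [Nat.even_add_one]
      rw [if_neg h, if_pos h', Even.neg_one_pow h']; ring

/-- Value of the sieving polynomial at `q` with `q^n = 1`. -/
theorem sieve_even {R : Type*} [CommRing R] (n k : ℕ) (x : Fin n → R) (y : Fin 2 → R)
    (h0 : y 0 = 1) (h1 : y 1 = 1) :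
    ∑ l ∈ Finset.range (k / 2 + 1), schur2 n (k - l) l x * hh 2 (k - 2 * l) y =
      ∑ p ∈ HasAntidiagonal.antidiagonal k, hh n p.1 x * hh n p.2 x := by
  rw [← schur2_weighted]
  refine Finset.sum_congr rfl fun l _ => ?_
  rw [hh_two _ _ h0, h1]
  simp

/-- Value of the sieving polynomial at `q` with `q^n = -1`. -/
theorem sieve_odd {R : Type*} [CommRing R] (n k : ℕ) (x : Fin n → R) (y : Fin 2 → R)
    (h0 : y 0 = 1) (h1 : y 1 = -1) :
    ∑ l ∈ Finset.range (k / 2 + 1), schur2 n (k - l) l x * hh 2 (k - 2 * l) y =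
      if Even k then hh n (k / 2) x * hh n (k / 2) x else 0 := by
  have e : ∀ l ∈ Finset.range (k / 2 + 1), schur2 n (k - l) l x * hh 2 (k - 2 * l) y =
      if Even k then schur2 n (k - l) l x else 0 := by
    intro l hl
    have hl' := Finset.mem_range.1 hl
    have h2 : Even (k - 2 * l) ↔ Even k := by rw [Nat.even_sub (by omega)]; simp
    rw [hh_two _ _ h0, h1, sum_neg_one_pow]
    simp only [h2, mul_ite, mul_one, mul_zero]
  rw [Finset.sum_congr rfl e]
  split_ifs with h
  · obtain ⟨c, hc⟩ := h
    rw [schur2_telescope n k x (k / 2) (by omega), show k - k / 2 = k / 2 by omega]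
  · simp

open PowerSeries in
/-- For a primitive `r`-th root of unity `η`, `∏_{i < rg} (1 - η^i t) = (1 - t^r)^g`. -/
theorem prod_one_sub_root {r g : ℕ} (hr : 0 < r) {η : ℂ} (hη : IsPrimitiveRoot η r) :
    ∏ i : Fin (r * g), (1 - C (η ^ (i : ℕ)) * X : PowerSeries ℂ) = (1 - X ^ r) ^ g := by
  have : NeZero r := ⟨hr.ne'⟩
  rw [Finset.prod_range (fun i => (1 - C (η ^ i) * X : PowerSeries ℂ)) |>.symm]
  have base : ∏ i ∈ Finset.range r, (1 - C (η ^ i) * X : PowerSeries ℂ) = 1 - X ^ r := by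
    have hC : IsPrimitiveRoot (C η : PowerSeries ℂ) r := hη.map_of_injective C_injective
    have := hC.pow_sub_pow_eq_prod_sub_mul (1 : PowerSeries ℂ) X hr
    rw [one_pow] at this
    rw [this]
    refine Finset.prod_nbij (fun i => (C η : PowerSeries ℂ) ^ i) ?_ ?_ ?_ ?_
    · intro i _
      rw [Polynomial.mem_nthRootsFinset hr, ← pow_mul, mul_comm, pow_mul, hC.pow_eq_one, one_pow]
    · intro i hi j hj hij
      exact hC.pow_inj (by simpa using hi) (by simpa using hj) hij
    · intro z hz
      obtain ⟨i, hi, rfl⟩ := hC.eq_pow_of_pow_eq_one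
        ((Polynomial.mem_nthRootsFinset hr _).1 (by simpa using hz))
      exact ⟨i, by simpa using hi, rfl⟩
    · intro i _
      rw [map_pow]
  induction g with
  | zero => simp
  | succ g ih =>
    rw [Nat.mul_succ, Finset.prod_range_add, ih, pow_succ]
    congr 1
    rw [← base]
    refine Finset.prod_congr rfl fun i _ => ?_
    rw [pow_add, pow_mul, hη.pow_eq_one, one_pow, one_mul]

/-! ### Rotation-invariant multisets -/

theorem sum_zmod {N : ℕ} [NeZero N] {M : Type*} [AddCommMonoid M] (f : ZMod N → M) :
    ∑ a, f a = ∑ v ∈ Finset.range N, f (v : ZMod N) := by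
  refine Finset.sum_nbij' (fun a : ZMod N => a.val) (fun v : ℕ => (v : ZMod N)) ?_ ?_ ?_ ?_ ?_
  · intro a _; exact Finset.mem_range.2 (ZMod.val_lt a)
  · intro v _; exact Finset.mem_univ _
  · intro a _; exact ZMod.natCast_zmod_val a
  · intro v hv; exact ZMod.val_cast_of_lt (Finset.mem_range.1 hv)
  · intro a _; rw [ZMod.natCast_zmod_val]

theorem sum_range_mod {M : Type*} [AddCommMonoid M] (g c : ℕ) (f : ℕ → M) :
    ∑ v ∈ Finset.range (c * g), f (v % g) = c • ∑ v ∈ Finset.range g, f v := by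
  induction c with
  | zero => simp
  | succ c ih =>
    rw [Nat.succ_mul, Finset.sum_range_add, ih, succ_nsmul]
    congr 1
    refine Finset.sum_congr rfl fun v hv => ?_
    rw [Nat.mul_add_mod_self_right, Nat.mod_eq_of_lt (Finset.mem_range.1 hv)]

/-- A function on the vertices of the `2n`-gon that is invariant under the antipodal map and
under rotation by `d`; the antipodal invariance makes it a multiset on `ZMod n`, with each
multiplicity appearing at two vertices. -/
def Per (n d : ℕ) (A : ZMod (2 * n) → ℕ) : Prop :=
  (∀ a, A (a + (n : ZMod (2 * n))) = A a) ∧ ∀ a, A (a + (d : ZMod (2 * n))) = A a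

/-- The periods of `A` form a subgroup, so they contain `gcd(n, d)`. -/
theorem Per.gcd {n d : ℕ} {A : ZMod (2 * n) → ℕ} (h : Per n d A) (a : ZMod (2 * n)) :
    A (a + (Nat.gcd n d : ℕ)) = A a := by
  let P : AddSubgroup (ZMod (2 * n)) :=
    { carrier := {z | ∀ a, A (a + z) = A a}
      zero_mem' := by intro a; rw [add_zero]
      add_mem' := by
        intro y z hy hz a
        rw [← add_assoc, hz, hy]
      neg_mem' := by
        intro z hz a
        rw [← hz (a + -z), neg_add_cancel_right] }
  have hn : (n : ZMod (2 * n)) ∈ P := h.1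
  have hd : (d : ZMod (2 * n)) ∈ P := h.2
  have e : ((Nat.gcd n d : ℕ) : ZMod (2 * n)) =
      Nat.gcdA n d • (n : ZMod (2 * n)) + Nat.gcdB n d • (d : ZMod (2 * n)) := by
    have := congrArg (fun z : ℤ => (z : ZMod (2 * n))) (Nat.gcd_eq_gcd_ab n d)
    simp only [Int.cast_natCast, Int.cast_add, Int.cast_mul] at this
    rw [this, zsmul_eq_mul, zsmul_eq_mul]; ring
  have hg : ((Nat.gcd n d : ℕ) : ZMod (2 * n)) ∈ P := by
    rw [e]
    exact P.add_mem (P.zsmul_mem hn _) (P.zsmul_mem hd _)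
  exact hg a

theorem Per.natCast {n d : ℕ} {A : ZMod (2 * n) → ℕ} (h : Per n d A) (v : ℕ) :
    A (v : ZMod (2 * n)) = A ((v % Nat.gcd n d : ℕ) : ZMod (2 * n)) := by
  have key : ∀ c w : ℕ, A ((w + c * Nat.gcd n d : ℕ) : ZMod (2 * n)) = A (w : ZMod (2 * n)) := by
    intro c w
    induction c with
    | zero => simp
    | succ c ih =>
      have e : ((w + (c + 1) * Nat.gcd n d : ℕ) : ZMod (2 * n)) =
          ((w + c * Nat.gcd n d : ℕ) : ZMod (2 * n)) + (Nat.gcd n d : ℕ) := by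
        push_cast; ring
      rw [e, h.gcd, ih]
  conv_lhs => rw [← Nat.mod_add_div' v (Nat.gcd n d)]
  exact key _ _

theorem val_add_mod {N g c : ℕ} [NeZero N] (hN : g ∣ N) (hc : g ∣ c) (a : ZMod N) :
    (a + (c : ZMod N)).val % g = a.val % g := by
  rw [ZMod.val_add, ZMod.val_natCast, Nat.mod_mod_of_dvd _ hN, Nat.add_mod,
    Nat.mod_mod_of_dvd _ hN, Nat.mod_eq_zero_of_dvd hc, add_zero, Nat.mod_mod]

theorem Per.sum {n d : ℕ} [NeZero (2 * n)] {A : ZMod (2 * n) → ℕ} (h : Per n d A) :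
    ∑ a, A a = 2 * (n / Nat.gcd n d) *
      ∑ j : Fin (Nat.gcd n d), A ((j : ℕ) : ZMod (2 * n)) := by
  rw [sum_zmod, Finset.sum_congr rfl (fun v _ => h.natCast v)]
  have e : 2 * n = (2 * (n / Nat.gcd n d)) * Nat.gcd n d := by
    rw [mul_assoc, Nat.div_mul_cancel (Nat.gcd_dvd_left n d)]
  have := sum_range_mod (Nat.gcd n d) (2 * (n / Nat.gcd n d))
    (fun v => A ((v : ℕ) : ZMod (2 * n)))
  rw [← e] at this
  rw [this, smul_eq_mul, Finset.sum_range (fun v => A ((v : ℕ) : ZMod (2 * n)))]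

/-- Periodic functions correspond to arbitrary functions on one period. -/
def perEquiv (n d m : ℕ) (hn : 0 < n) [NeZero (2 * n)] :
    {A : ZMod (2 * n) → ℕ // Per n d A ∧ ∑ a, A a = 2 * m} ≃
      {f : Fin (Nat.gcd n d) → ℕ // (n / Nat.gcd n d) * ∑ j, f j = m} where
  toFun A := ⟨fun j => A.1 ((j : ℕ) : ZMod (2 * n)), by
    have h := A.2.2
    rw [A.2.1.sum, mul_assoc] at h
    exact Nat.eq_of_mul_eq_mul_left two_pos h⟩
  invFun f := ⟨fun a => f.1 ⟨a.val % Nat.gcd n d, Nat.mod_lt _ (Nat.gcd_pos_of_pos_left _ hn)⟩, by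
    have hN : Nat.gcd n d ∣ 2 * n := (Nat.gcd_dvd_left n d).mul_left 2
    have hp : Per n d (fun a : ZMod (2 * n) =>
        f.1 ⟨a.val % Nat.gcd n d, Nat.mod_lt _ (Nat.gcd_pos_of_pos_left _ hn)⟩) :=
      ⟨fun a => by simp only [val_add_mod hN (Nat.gcd_dvd_left n d)],
        fun a => by simp only [val_add_mod hN (Nat.gcd_dvd_right n d)]⟩
    refine ⟨hp, ?_⟩
    rw [hp.sum, mul_assoc]
    refine congrArg (2 * ·) (Eq.trans (congrArg (n / Nat.gcd n d * ·) ?_) f.2)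
    refine Finset.sum_congr rfl fun j _ => ?_
    refine congrArg f.1 (Fin.ext ?_)
    simp only [ZMod.val_natCast, Nat.mod_mod_of_dvd _ hN]
    exact Nat.mod_eq_of_lt j.2⟩
  left_inv A := by
    ext a
    simp only
    rw [← A.2.1.natCast, ZMod.natCast_zmod_val]
  right_inv f := by
    ext j
    have hN : Nat.gcd n d ∣ 2 * n := (Nat.gcd_dvd_left n d).mul_left 2
    refine congrArg f.1 (Fin.ext ?_)
    simp only [ZMod.val_natCast, Nat.mod_mod_of_dvd _ hN]
    exact Nat.mod_eq_of_lt j.2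

open PowerSeries in
/-- The generating function counting functions on `g` points by `r` times their total is the
`g`-th power of `∑ t^{ri}`. -/
theorem card_scaled (r g : ℕ) (hr : 0 < r) :
    PowerSeries.mk (fun m => (Nat.card {f : Fin g → ℕ // r * ∑ j, f j = m} : ℂ)) =
      (PowerSeries.mk (fun m => if r ∣ m then (1 : ℂ) else 0)) ^ g := by
  classical
  ext m
  have e : (PowerSeries.mk (fun m => if r ∣ m then (1 : ℂ) else 0)) ^ g =
      ∏ _j : Fin g, PowerSeries.mk (fun m => if r ∣ m then (1 : ℂ) else 0) := by
    simp
  rw [e, coeff_prod, coeff_mk]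
  simp only [coeff_mk, Finset.prod_ite_zero, Finset.prod_const_one]
  rw [← Finset.sum_filter, Finset.sum_const, nsmul_eq_mul, mul_one]
  congr 1
  rw [← Nat.card_eq_finsetCard]
  refine Nat.card_congr
    { toFun := fun f => ⟨Finsupp.equivFunOnFinite.symm (fun j => r * f.1 j), ?_⟩
      invFun := fun l => ⟨fun j => l.1 j / r, ?_⟩
      left_inv := fun f => ?_
      right_inv := fun l => ?_ }
  · have h := f.2
    rw [Finset.mul_sum] at h
    simp [h]
  · have h := l.2
    simp only [Finset.mem_filter, Finset.mem_finsuppAntidiag, Finset.mem_univ, true_imp_iff] at h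
    rw [Finset.mul_sum]
    exact (Finset.sum_congr rfl fun j _ => Nat.mul_div_cancel' (h.2 j)).trans h.1.1
  · ext j
    simp [Nat.mul_div_cancel_left _ hr]
  · have h := l.2
    simp only [Finset.mem_filter, Finset.mem_univ, true_imp_iff] at h
    ext j
    exact Nat.mul_div_cancel' (h.2 j)

open PowerSeries in
theorem geom_mul (r : ℕ) (hr : 0 < r) :
    (PowerSeries.mk (fun m => if r ∣ m then (1 : ℂ) else 0)) * (1 - X ^ r) = 1 := by
  ext m
  rw [mul_sub, mul_one, map_sub, coeff_mul_X_pow', coeff_mk, coeff_mk, coeff_one]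
  by_cases h : r ≤ m
  · rw [if_pos h, if_neg (by omega : m ≠ 0)]
    have e : r ∣ m - r ↔ r ∣ m := (Nat.dvd_sub_iff_left h dvd_rfl)
    simp only [e, sub_self]
  · rw [if_neg h, sub_zero]
    by_cases h0 : m = 0
    · simp [h0]
    · rw [if_neg h0, if_neg]
      exact fun hd => h (Nat.le_of_dvd (by omega) hd)


/-- The number of multisets of size `m` on `ZMod n` that are invariant under rotation by `d` is
the evaluation of `h_m(1, q², …, q^{2(n-1)})` at `q = e^{πid/n}`. -/
theorem card_per (n d m : ℕ) (hn : 0 < n) [NeZero (2 * n)] :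
    (Nat.card {A : ZMod (2 * n) → ℕ // Per n d A ∧ ∑ a, A a = 2 * m} : ℂ) =
      hh n m (fun i : Fin n => (Complex.exp (Real.pi * Complex.I / n) ^ d) ^ (2 * (i : ℕ))) := by
  set ζ := Complex.exp (Real.pi * Complex.I / n) with hζ
  have hζ2 : IsPrimitiveRoot (ζ ^ 2) n := by
    have := Complex.isPrimitiveRoot_exp n hn.ne'
    rw [hζ, ← Complex.exp_nat_mul]
    convert this using 2
    push_cast; ring
  set g := Nat.gcd n d with hg
  have hgn : g ∣ n := Nat.gcd_dvd_left n d
  have hg0 : 0 < g := Nat.gcd_pos_of_pos_left _ hn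
  have hr : 0 < n / g := Nat.div_pos (Nat.le_of_dvd hn hgn) hg0
  have hη : IsPrimitiveRoot ((ζ ^ 2) ^ d) (n / g) := by
    rw [IsPrimitiveRoot.iff_orderOf,
      IsOfFinOrder.orderOf_pow _ _ (isOfFinOrder_iff_pow_eq_one.2 ⟨n, hn, hζ2.pow_eq_one⟩), ← hζ2.eq_orderOf]
  have hrg : n / g * g = n := Nat.div_mul_cancel hgn
  have hx : (fun i : Fin n => (ζ ^ d) ^ (2 * (i : ℕ))) =
      fun i : Fin n => ((ζ ^ 2) ^ d) ^ (i : ℕ) := by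
    funext i
    rw [pow_mul, ← pow_mul ζ d 2, mul_comm d 2, pow_mul]
  rw [hx, Nat.card_congr (perEquiv n d m hn)]
  have h1 := hh_genfun n (fun i : Fin n => ((ζ ^ 2) ^ d) ^ (i : ℕ))
  have h2 : ∏ i : Fin n, (1 - PowerSeries.C (((ζ ^ 2) ^ d) ^ (i : ℕ)) * PowerSeries.X) =
      ((1 - PowerSeries.X ^ (n / g)) ^ g : PowerSeries ℂ) := by
    rw [← prod_one_sub_root hr hη]
    exact (Fin.prod_congr' (fun i : Fin n =>
      (1 - PowerSeries.C (((ζ ^ 2) ^ d) ^ (i : ℕ)) * PowerSeries.X : PowerSeries ℂ)) hrg).symm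
  rw [h2] at h1
  have h3 : PowerSeries.mk (fun m =>
      (Nat.card {f : Fin g → ℕ // (n / g) * ∑ j, f j = m} : ℂ)) *
      (1 - PowerSeries.X ^ (n / g)) ^ g = 1 := by
    rw [card_scaled _ _ hr, ← mul_pow, geom_mul _ hr, one_pow]
  have h4 : PowerSeries.mk (fun m =>
      (Nat.card {f : Fin g → ℕ // (n / g) * ∑ j, f j = m} : ℂ)) =
      PowerSeries.mk (fun a => hh n a (fun i : Fin n => ((ζ ^ 2) ^ d) ^ (i : ℕ))) :=
    left_inv_eq_right_inv h3 (by rw [mul_comm]; exact h1)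
  simpa using congrArg (PowerSeries.coeff m) h4

/-! ### Crossing and vertex weights -/

theorem zmod_val_sub {N : ℕ} [NeZero N] (a b : ZMod N) :
    (a - b).val = if b.val ≤ a.val then a.val - b.val else a.val + N - b.val := by
  have ha := ZMod.val_lt a
  have hb := ZMod.val_lt b
  split_ifs with h
  · exact ZMod.val_sub h
  · have e : a - b = ((a.val + N - b.val : ℕ) : ZMod N) := by
      rw [Nat.cast_sub (by omega)]
      simp
    rw [e, ZMod.val_cast_of_lt (by omega)]

/-- Crossing in terms of clockwise distances measured from the endpoint `i`. -/
theorem crossE_iff {N : ℕ} [NeZero N] (i j a b : ZMod N) :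
    crossE i j a b ↔
      (0 < (a - i).val ∧ (a - i).val < (j - i).val ∧ (j - i).val < (b - i).val) ∨
      (0 < (b - i).val ∧ (b - i).val < (j - i).val ∧ (j - i).val < (a - i).val) := by
  unfold crossE
  have hi := ZMod.val_lt i
  have hj := ZMod.val_lt j
  have ha := ZMod.val_lt a
  have hb := ZMod.val_lt b
  rw [zmod_val_sub a i, zmod_val_sub b i, zmod_val_sub j i]
  generalize i.val = i at *
  generalize j.val = j at *
  generalize a.val = a at *
  generalize b.val = b at *
  split_ifs <;> omega

theorem crossE_symm {N : ℕ} {i j a b : ZMod N} (h : crossE i j a b) : crossE a b i j :=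
  Or.symm h

theorem crossE_swap {N : ℕ} {i j a b : ZMod N} (h : crossE i j a b) : crossE j i a b := by
  unfold crossE at *
  rwa [min_comm j.val, max_comm j.val]

theorem crossE_swap' {N : ℕ} {i j a b : ZMod N} (h : crossE i j a b) : crossE i j b a :=
  crossE_symm (crossE_swap (crossE_symm h))

theorem crossE_add {N : ℕ} [NeZero N] (c i j a b : ZMod N) :
    crossE (i + c) (j + c) (a + c) (b + c) ↔ crossE i j a b := by
  simp only [crossE_iff, add_sub_add_right_eq_sub]

section Geometry

variable {n : ℕ}

theorem nn_zero : (n : ZMod (2 * n)) + n = 0 := by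
  have := ZMod.natCast_self (2 * n)
  push_cast at this
  rw [← this]; ring

theorem add_nn (a : ZMod (2 * n)) : a + (n : ZMod (2 * n)) + n = a := by
  rw [add_assoc, nn_zero, add_zero]

theorem val_nat [NeZero (2 * n)] {l : ℕ} (h : l < 2 * n) : ((l : ℕ) : ZMod (2 * n)).val = l :=
  ZMod.val_cast_of_lt h

/-- Relative position of two vertices. -/
theorem offset_cases [NeZero (2 * n)] (a b : ZMod (2 * n)) :
    b = a ∨ b = a + (n : ZMod (2 * n)) ∨
      (∃ l ∈ Finset.Ioo 0 n, b = a + ((l : ℕ) : ZMod (2 * n))) ∨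
      ∃ l ∈ Finset.Ioo 0 n, a = b + ((l : ℕ) : ZMod (2 * n)) := by
  have hb : b = a + (((b - a).val : ℕ) : ZMod (2 * n)) := by
    rw [ZMod.natCast_zmod_val]; ring
  have ht := ZMod.val_lt (b - a)
  generalize (b - a).val = t at *
  rcases Nat.eq_zero_or_pos t with h0 | h0
  · left; rw [hb, h0]; simp
  · rcases lt_trichotomy t n with h | h | h
    · right; right; left
      exact ⟨t, Finset.mem_Ioo.2 ⟨h0, h⟩, hb⟩
    · right; left; rw [hb, h]
    · right; right; right
      refine ⟨2 * n - t, Finset.mem_Ioo.2 ⟨by omega, by omega⟩, ?_⟩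
      rw [hb, Nat.cast_sub ht.le, ZMod.natCast_self]; ring

/-- Number of arc starts and blue radii at the vertex `i`, for the orientation in which a
non-diameter edge runs clockwise along its shorter side. -/
def outW (F : DTriple n) (i : ZMod (2 * n)) : ℕ :=
  F.2.1 i + ∑ l ∈ Finset.Ioo 0 n, F.1 i (i + ((l : ℕ) : ZMod (2 * n)))

/-- Number of arc ends and red radii at the vertex `j`. -/
def inW (F : DTriple n) (j : ZMod (2 * n)) : ℕ :=
  F.2.2 j + ∑ l ∈ Finset.Ioo 0 n, F.1 (j - ((l : ℕ) : ZMod (2 * n))) j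

/-- The start of an arc of positive multiplicity has nonzero start weight. -/
theorem outW_ne_of_arc {F : DTriple n} {i : ZMod (2 * n)} {l : ℕ} (hl : l ∈ Finset.Ioo 0 n)
    (h : F.1 i (i + ((l : ℕ) : ZMod (2 * n))) ≠ 0) : outW F i ≠ 0 := by
  have := Finset.single_le_sum (f := fun l : ℕ => F.1 i (i + (l : ZMod (2 * n))))
    (fun _ _ => Nat.zero_le _) hl
  unfold outW
  have h' := Nat.pos_of_ne_zero h
  have := h'.trans_le this
  omega

theorem inW_ne_of_arc {F : DTriple n} {i : ZMod (2 * n)} {l : ℕ} (hl : l ∈ Finset.Ioo 0 n)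
    (h : F.1 i (i + ((l : ℕ) : ZMod (2 * n))) ≠ 0) :
    inW F (i + ((l : ℕ) : ZMod (2 * n))) ≠ 0 := by
  have := Finset.single_le_sum
    (f := fun m : ℕ => F.1 (i + (l : ZMod (2 * n)) - (m : ZMod (2 * n))) (i + (l : ZMod (2 * n))))
    (fun _ _ => Nat.zero_le _) hl
  simp only [add_sub_cancel_right] at this
  unfold inW; omega

theorem outW_ne_of_blue {F : DTriple n} {i : ZMod (2 * n)} (h : F.2.1 i ≠ 0) : outW F i ≠ 0 := by
  unfold outW; omega

theorem inW_ne_of_red {F : DTriple n} {i : ZMod (2 * n)} (h : F.2.2 i ≠ 0) : inW F i ≠ 0 := by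
  unfold inW; omega

theorem exists_of_outW_ne {F : DTriple n} {i : ZMod (2 * n)} (h : outW F i ≠ 0) :
    F.2.1 i ≠ 0 ∨ ∃ l ∈ Finset.Ioo 0 n, F.1 i (i + ((l : ℕ) : ZMod (2 * n))) ≠ 0 := by
  by_contra hc
  push Not at hc
  exact h (by unfold outW; rw [hc.1, Finset.sum_eq_zero hc.2, add_zero])

theorem exists_of_inW_ne {F : DTriple n} {j : ZMod (2 * n)} (h : inW F j ≠ 0) :
    F.2.2 j ≠ 0 ∨ ∃ l ∈ Finset.Ioo 0 n, F.1 (j - ((l : ℕ) : ZMod (2 * n))) j ≠ 0 := by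
  by_contra hc
  push Not at hc
  exact h (by unfold inW; rw [hc.1, Finset.sum_eq_zero hc.2, add_zero])

/-- A vertex with no arc start and no arc end meets no edge. -/
theorem edge_eq_zero [NeZero (2 * n)] {F : DTriple n} (hF : IsDMulti n F) {a : ZMod (2 * n)}
    (ho : outW F a = 0) (hi : inW F a = 0) (b : ZMod (2 * n)) : F.1 a b = 0 := by
  obtain ⟨hs, hl, hd, -⟩ := hF
  rcases offset_cases a b with h | h | ⟨l, hl', h⟩ | ⟨l, hl', h⟩
  · rw [h, hl]
  · rw [h, hd]
  · by_contra hne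
    rw [h] at hne
    exact outW_ne_of_arc hl' hne ho
  · by_contra hne
    rw [hs, h] at hne
    rw [h] at hi
    exact inW_ne_of_arc hl' hne hi

/-- If an arc start at `i` and an arc end at `i + L` have no arc start or end strictly between
them, then noncrossing forces the edge `{i, i + L}` to be present. -/
theorem forced_edge [NeZero (2 * n)] {F : DTriple n} (hF : IsDMulti n F) {i : ZMod (2 * n)}
    {L : ℕ} (hL : 0 < L) (hLn : L < n)
    (hA : outW F i ≠ 0) (hB : inW F (i + (L : ZMod (2 * n))) ≠ 0)
    (hbo : ∀ t, 0 < t → t < L → outW F (i + (t : ZMod (2 * n))) = 0)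
    (hbi : ∀ t, 0 < t → t < L → inW F (i + (t : ZMod (2 * n))) = 0) :
    F.1 i (i + (L : ZMod (2 * n))) ≠ 0 := by
  intro h0
  have hF' := hF
  obtain ⟨hs, hl, hd, hant, hb, hr, hcc, hcb, hcr, hbr⟩ := hF'
  set j := i + (L : ZMod (2 * n)) with hj
  have hji : j - i = (L : ZMod (2 * n)) := by rw [hj]; ring
  have hij : i - j = ((2 * n - L : ℕ) : ZMod (2 * n)) := by
    rw [Nat.cast_sub (by omega), ZMod.natCast_self, hj]; ring
  -- every arc starting at `i` is longer than `L`
  have hout : ∀ m ∈ Finset.Ioo 0 n, F.1 i (i + ((m : ℕ) : ZMod (2 * n))) ≠ 0 → L < m := by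
    intro m hm hne
    have hm' := Finset.mem_Ioo.1 hm
    rcases lt_trichotomy m L with h | h | h
    · exact absurd (hbi m hm'.1 h) (inW_ne_of_arc hm hne)
    · rw [h] at hne; exact absurd h0 hne
    · exact h
  have hin : ∀ m ∈ Finset.Ioo 0 n, F.1 (j - ((m : ℕ) : ZMod (2 * n))) j ≠ 0 → L < m := by
    intro m hm hne
    have hm' := Finset.mem_Ioo.1 hm
    rcases lt_trichotomy m L with h | h | h
    · have e : j - ((m : ℕ) : ZMod (2 * n)) = i + ((L - m : ℕ) : ZMod (2 * n)) := by
        rw [Nat.cast_sub h.le, hj]; ring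
      have hz := hbo (L - m) (by omega) (by omega)
      rw [← e] at hz
      refine absurd hz (outW_ne_of_arc hm ?_)
      rwa [sub_add_cancel]
    · rw [h, hj, add_sub_cancel_right] at hne; exact absurd h0 hne
    · exact h
  rcases exists_of_outW_ne hA with hbl | ⟨m, hm, hne⟩ <;>
    rcases exists_of_inW_ne hB with hrd | ⟨m', hm', hne'⟩
  · rcases hbr i j hbl hrd with h | h
    · rw [h, sub_self] at hji
      have := congrArg ZMod.val hji
      rw [val_nat (by omega), ZMod.val_zero] at this; omega
    · have h' : j - i = (n : ZMod (2 * n)) := by rw [h]; ring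
      have := congrArg ZMod.val (hji.symm.trans h')
      rw [val_nat (by omega), val_nat (by omega)] at this; omega
  · have hlt := hin m' hm' hne'
    have hm2 := Finset.mem_Ioo.1 hm'
    have hc : crossE i (i + (n : ZMod (2 * n))) (j - (m' : ZMod (2 * n))) j := by
      rw [crossE_iff]
      right
      have e : j - (m' : ZMod (2 * n)) - i = ((2 * n + L - m' : ℕ) : ZMod (2 * n)) := by
        rw [Nat.cast_sub (by omega), Nat.cast_add, ZMod.natCast_self, hj]; ring
      rw [e, hji, add_sub_cancel_left, val_nat (by omega), val_nat (by omega), val_nat (by omega)]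
      omega
    rcases hcb _ _ _ hc with h | h
    · exact hbl h
    · exact hne' h
  · have hlt := hout m hm hne
    have hm2 := Finset.mem_Ioo.1 hm
    have hc : crossE j (j + (n : ZMod (2 * n))) i (i + (m : ZMod (2 * n))) := by
      rw [crossE_iff]
      right
      have e : i + (m : ZMod (2 * n)) - j = ((m - L : ℕ) : ZMod (2 * n)) := by
        rw [Nat.cast_sub (by omega), hj]; ring
      rw [e, hij, add_sub_cancel_left, val_nat (by omega), val_nat (by omega), val_nat (by omega)]
      omega
    rcases hcr _ _ _ hc with h | h
    · exact hrd h
    · exact hne h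
  · have hlt := hout m hm hne
    have hm2 := Finset.mem_Ioo.1 hm
    have hlt' := hin m' hm' hne'
    have hm2' := Finset.mem_Ioo.1 hm'
    have hc : crossE i (i + (m : ZMod (2 * n))) (j - (m' : ZMod (2 * n))) j := by
      rw [crossE_iff]
      right
      have e : j - (m' : ZMod (2 * n)) - i = ((2 * n + L - m' : ℕ) : ZMod (2 * n)) := by
        rw [Nat.cast_sub (by omega), Nat.cast_add, ZMod.natCast_self, hj]; ring
      rw [e, hji, add_sub_cancel_left, val_nat (by omega), val_nat (by omega), val_nat (by omega)]
      omega
    rcases hcc _ _ _ _ hc with h | h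
    · exact hne h
    · exact hne' h

/-! ### Reconstruction from the vertex weights -/

open Classical in
/-- The centrally symmetric pair of edges spanned by `{i, j}`, as a multiplicity function. -/
noncomputable def pairInd (i j a b : ZMod (2 * n)) : ℕ :=
  if (a = i ∧ b = j) ∨ (a = j ∧ b = i) ∨ (a = i + (n : ZMod (2 * n)) ∧ b = j + (n : ZMod (2 * n)))
    ∨ (a = j + (n : ZMod (2 * n)) ∧ b = i + (n : ZMod (2 * n))) then 1 else 0

open Classical in
/-- The indicator of the antipodal pair of vertices `{i, i + n}`. -/
noncomputable def vertInd (i v : ZMod (2 * n)) : ℕ :=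
  if v = i ∨ v = i + (n : ZMod (2 * n)) then 1 else 0

/-- Add one copy of the pair spanned by `{i, j}`. -/
noncomputable def addPair (F : DTriple n) (i j : ZMod (2 * n)) : DTriple n :=
  (fun a b => F.1 a b + pairInd i j a b, F.2)

/-- Remove one copy of the pair spanned by `{i, j}`. -/
noncomputable def subPair (F : DTriple n) (i j : ZMod (2 * n)) : DTriple n :=
  (fun a b => F.1 a b - pairInd i j a b, F.2)

theorem eq_add_nn_iff (a b : ZMod (2 * n)) :
    a + (n : ZMod (2 * n)) = b ↔ a = b + (n : ZMod (2 * n)) := by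
  constructor
  · rintro rfl; rw [add_nn]
  · rintro rfl; rw [add_nn]

theorem pairInd_symm (i j a b : ZMod (2 * n)) : pairInd i j a b = pairInd i j b a := by
  unfold pairInd
  congr 1
  apply propext
  tauto

theorem pairInd_add (i j a b : ZMod (2 * n)) :
    pairInd i j (a + (n : ZMod (2 * n))) (b + (n : ZMod (2 * n))) = pairInd i j a b := by
  unfold pairInd
  congr 1
  apply propext
  simp only [eq_add_nn_iff, add_left_inj]
  tauto

theorem vertInd_add (i v : ZMod (2 * n)) :
    vertInd i (v + (n : ZMod (2 * n))) = vertInd i v := by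
  unfold vertInd
  congr 1
  apply propext
  simp only [eq_add_nn_iff, add_nn]
  tauto

theorem natCast_inj_of_lt [NeZero (2 * n)] {a b : ℕ} (ha : a < 2 * n) (hb : b < 2 * n)
    (h : (a : ZMod (2 * n)) = b) : a = b := by
  have := congrArg ZMod.val h
  rwa [val_nat ha, val_nat hb] at this

/-- An arc of length `l` starting at `v` belongs to the pair spanned by `{i, i + L}` exactly when
`l = L` and `v` is `i` or its antipode: traversed backwards, this pair consists of arcs longer
than `n`. -/
theorem pairInd_arc [NeZero (2 * n)] (i v : ZMod (2 * n)) {l L : ℕ} (hl : l ∈ Finset.Ioo 0 n)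
    (hL : L ∈ Finset.Ioo 0 n) :
    pairInd i (i + (L : ZMod (2 * n))) v (v + (l : ZMod (2 * n))) =
      if l = L then vertInd i v else 0 := by
  have hl := Finset.mem_Ioo.1 hl
  have hL := Finset.mem_Ioo.1 hL
  have hz : ((L : ZMod (2 * n)) + l) ≠ 0 := by
    intro h
    have : ((L + l : ℕ) : ZMod (2 * n)) = ((0 : ℕ) : ZMod (2 * n)) := by push_cast; exact h
    have := natCast_inj_of_lt (by omega) (by omega) this
    omega
  have h2 : i + (L : ZMod (2 * n)) + l ≠ i := by
    rw [add_assoc]; simpa using hz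
  have h3 : i + (L : ZMod (2 * n)) + n + l ≠ i + n := by
    intro h
    apply hz
    linear_combination h
  have h4 : l ≠ L → i + (l : ZMod (2 * n)) ≠ i + L := by
    intro hne h
    exact hne (natCast_inj_of_lt (by omega) (by omega) (add_left_cancel h))
  have h5 : l ≠ L → i + (n : ZMod (2 * n)) + l ≠ i + L + n := by
    intro hne h
    apply hne
    apply natCast_inj_of_lt (n := n) (by omega) (by omega)
    linear_combination h
  unfold pairInd vertInd
  by_cases hlL : l = L
  · subst hlL
    simp only [if_true]
    congr 1
    apply propext
    constructor
    · rintro (⟨rfl, h⟩ | ⟨rfl, h⟩ | ⟨rfl, h⟩ | ⟨rfl, h⟩)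
      · left; rfl
      · exact absurd h h2
      · right; rfl
      · exact absurd h h3
    · rintro (rfl | rfl)
      · left; exact ⟨rfl, rfl⟩
      · right; right; left; exact ⟨rfl, by ring⟩
  · rw [if_neg hlL, if_neg]
    rintro (⟨rfl, h⟩ | ⟨rfl, h⟩ | ⟨rfl, h⟩ | ⟨rfl, h⟩)
    · exact h4 hlL h
    · exact h2 h
    · exact h5 hlL h
    · exact h3 h

theorem outW_addPair [NeZero (2 * n)] (F : DTriple n) (i v : ZMod (2 * n)) {L : ℕ}
    (hL : L ∈ Finset.Ioo 0 n) :
    outW (addPair F i (i + (L : ZMod (2 * n)))) v = outW F v + vertInd i v := by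
  unfold outW addPair
  rw [Finset.sum_add_distrib, Finset.sum_congr rfl (fun l hl => pairInd_arc i v hl hL),
    Finset.sum_ite_eq', if_pos hL, add_assoc]

theorem inW_addPair [NeZero (2 * n)] (F : DTriple n) (i v : ZMod (2 * n)) {L : ℕ}
    (hL : L ∈ Finset.Ioo 0 n) :
    inW (addPair F i (i + (L : ZMod (2 * n)))) v =
      inW F v + vertInd (i + (L : ZMod (2 * n))) v := by
  have key : ∀ l ∈ Finset.Ioo 0 n,
      pairInd i (i + (L : ZMod (2 * n))) (v - (l : ZMod (2 * n))) v =
        if l = L then vertInd (i + (L : ZMod (2 * n))) v else 0 := by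
    intro l hl
    have := pairInd_arc i (v - (l : ZMod (2 * n))) hl hL
    rw [sub_add_cancel] at this
    rw [this]
    split_ifs with h
    · subst h
      unfold vertInd
      congr 1
      apply propext
      rw [sub_eq_iff_eq_add, sub_eq_iff_eq_add, add_right_comm]
    · rfl
  unfold inW addPair
  rw [Finset.sum_add_distrib, Finset.sum_congr rfl key, Finset.sum_ite_eq', if_pos hL, add_assoc]

theorem isDMulti_subPair {F : DTriple n} (hF : IsDMulti n F) (i j : ZMod (2 * n)) :
    IsDMulti n (subPair F i j) := by
  obtain ⟨hs, hl, hd, hant, hb, hr, hcc, hcb, hcr, hbr⟩ := hF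
  unfold subPair
  refine ⟨fun a b => ?_, fun a => ?_, fun a => ?_, fun a b => ?_, hb, hr, fun a b c d h => ?_,
    fun a c d h => ?_, fun a c d h => ?_, hbr⟩
  · simp only; rw [hs, pairInd_symm]
  · simp only; rw [hl, Nat.zero_sub]
  · simp only; rw [hd, Nat.zero_sub]
  · simp only; rw [hant, pairInd_add]
  · rcases hcc a b c d h with h | h
    · left; simp only; rw [h, Nat.zero_sub]
    · right; simp only; rw [h, Nat.zero_sub]
  · rcases hcb a c d h with h | h
    · left; exact h
    · right; simp only; rw [h, Nat.zero_sub]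
  · rcases hcr a c d h with h | h
    · left; exact h
    · right; simp only; rw [h, Nat.zero_sub]

theorem addPair_subPair {F : DTriple n} (hF : IsDMulti n F) {i j : ZMod (2 * n)}
    (h : F.1 i j ≠ 0) : addPair (subPair F i j) i j = F := by
  obtain ⟨hs, hl, hd, hant, -⟩ := hF
  unfold addPair subPair
  refine Prod.ext ?_ rfl
  funext a b
  simp only
  apply Nat.sub_add_cancel
  unfold pairInd
  split_ifs with hc
  · rw [Nat.one_le_iff_ne_zero]
    rcases hc with ⟨rfl, rfl⟩ | ⟨rfl, rfl⟩ | ⟨rfl, rfl⟩ | ⟨rfl, rfl⟩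
    · exact h
    · rwa [hs]
    · rwa [hant]
    · rwa [hant, hs]
  · exact Nat.zero_le _

/-- An edge crossing `{i, i + L}` has an endpoint strictly between `i` and `i + L`. -/
theorem between_of_crossE [NeZero (2 * n)] {i a b : ZMod (2 * n)} {L : ℕ} (hL : L < n)
    (h : crossE i (i + (L : ZMod (2 * n))) a b) :
    ∃ t, 0 < t ∧ t < L ∧ (a = i + (t : ZMod (2 * n)) ∨ b = i + (t : ZMod (2 * n))) := by
  rw [crossE_iff, add_sub_cancel_left, val_nat (by omega)] at h
  rcases h with ⟨h1, h2, -⟩ | ⟨h1, h2, -⟩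
  · refine ⟨_, h1, h2, Or.inl ?_⟩
    rw [ZMod.natCast_zmod_val]; ring
  · refine ⟨_, h1, h2, Or.inr ?_⟩
    rw [ZMod.natCast_zmod_val]; ring

theorem pairInd_ne {i j a b : ZMod (2 * n)} (h : pairInd i j a b ≠ 0) :
    (a = i ∧ b = j) ∨ (a = j ∧ b = i) ∨ (a = i + (n : ZMod (2 * n)) ∧ b = j + (n : ZMod (2 * n)))
    ∨ (a = j + (n : ZMod (2 * n)) ∧ b = i + (n : ZMod (2 * n))) := by
  unfold pairInd at h
  by_contra hc
  exact h (if_neg hc)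

theorem pairInd_between [NeZero (2 * n)] {i b : ZMod (2 * n)} {L t : ℕ} (hL : L < n) (ht : 0 < t)
    (htL : t < L) : pairInd i (i + (L : ZMod (2 * n))) (i + (t : ZMod (2 * n))) b = 0 := by
  by_contra hne
  have key : ∀ s : ℕ, s < 2 * n → s ≠ t →
      i + (t : ZMod (2 * n)) ≠ i + (s : ZMod (2 * n)) := fun s hs hst h =>
    hst (natCast_inj_of_lt (by omega) (by omega) (add_left_cancel h)).symm
  rcases pairInd_ne hne with ⟨h, -⟩ | ⟨h, -⟩ | ⟨h, -⟩ | ⟨h, -⟩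
  · exact key 0 (by omega) (by omega) (by rw [h]; simp)
  · exact key L (by omega) (by omega) h
  · exact key n (by omega) (by omega) h
  · exact key (L + n) (by omega) (by omega) (by rw [h]; push_cast; ring)

/-- A pair may be added when no arc starts or ends strictly between its endpoints. -/
theorem isDMulti_addPair [NeZero (2 * n)] {F : DTriple n} (hF : IsDMulti n F) {i : ZMod (2 * n)}
    {L : ℕ} (hL : 0 < L) (hLn : L < n)
    (hbo : ∀ t, 0 < t → t < L → outW F (i + (t : ZMod (2 * n))) = 0)
    (hbi : ∀ t, 0 < t → t < L → inW F (i + (t : ZMod (2 * n))) = 0) :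
    IsDMulti n (addPair F i (i + (L : ZMod (2 * n)))) := by
  have hF' := hF
  obtain ⟨hs, hl, hd, hant, hb, hr, hcc, hcb, hcr, hbr⟩ := hF'
  set j := i + (L : ZMod (2 * n)) with hj
  have core : ∀ a b, crossE i j a b → F.1 a b = 0 ∧ pairInd i j a b = 0 := by
    intro a b h
    obtain ⟨t, ht, htL, rfl | rfl⟩ := between_of_crossE hLn h
    · exact ⟨edge_eq_zero hF (hbo t ht htL) (hbi t ht htL) b, pairInd_between hLn ht htL⟩
    · rw [hs, pairInd_symm]
      exact ⟨edge_eq_zero hF (hbo t ht htL) (hbi t ht htL) a, pairInd_between hLn ht htL⟩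
  have corer : ∀ a, crossE i j a (a + (n : ZMod (2 * n))) → F.2.1 a = 0 ∧ F.2.2 a = 0 := by
    intro a h
    obtain ⟨t, ht, htL, h | h⟩ := between_of_crossE hLn h
    · have h1 := hbo t ht htL
      have h2 := hbi t ht htL
      rw [← h] at h1 h2
      constructor
      · by_contra hne; exact outW_ne_of_blue hne h1
      · by_contra hne; exact inW_ne_of_red hne h2
    · have h1 := hbo t ht htL
      have h2 := hbi t ht htL
      rw [← h] at h1 h2
      constructor
      · by_contra hne; rw [← hb] at hne; exact outW_ne_of_blue hne h1
      · by_contra hne; rw [← hr] at hne; exact inW_ne_of_red hne h2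
  have shift : ∀ a b, crossE (i + (n : ZMod (2 * n))) (j + (n : ZMod (2 * n))) a b →
      crossE i j (a + (n : ZMod (2 * n))) (b + (n : ZMod (2 * n))) := by
    intro a b h
    rw [← crossE_add (n : ZMod (2 * n)), add_nn, add_nn]
    exact h
  -- By symmetry, what holds for `{i, j}` holds for both orientations and the antipodal edge.
  have full : ∀ p q a b, pairInd i j p q ≠ 0 → crossE p q a b →
      F.1 a b = 0 ∧ pairInd i j a b = 0 := by
    intro p q a b hp hc
    rcases pairInd_ne hp with ⟨rfl, rfl⟩ | ⟨rfl, rfl⟩ | ⟨rfl, rfl⟩ | ⟨rfl, rfl⟩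
    · exact core a b hc
    · exact core a b (crossE_swap hc)
    · have := core _ _ (shift _ _ hc)
      rwa [hant, pairInd_add] at this
    · have := core _ _ (shift _ _ (crossE_swap hc))
      rwa [hant, pairInd_add] at this
  have fullr : ∀ p q a, pairInd i j p q ≠ 0 → crossE p q a (a + (n : ZMod (2 * n))) →
      F.2.1 a = 0 ∧ F.2.2 a = 0 := by
    intro p q a hp hc
    rcases pairInd_ne hp with ⟨rfl, rfl⟩ | ⟨rfl, rfl⟩ | ⟨rfl, rfl⟩ | ⟨rfl, rfl⟩
    · exact corer a hc
    · exact corer a (crossE_swap hc)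
    · have := corer _ (shift _ _ hc)
      rwa [hb, hr] at this
    · have := corer _ (shift _ _ (crossE_swap hc))
      rwa [hb, hr] at this
  unfold addPair
  refine ⟨fun a b => ?_, fun a => ?_, fun a => ?_, fun a b => ?_, hb, hr, fun a b c d h => ?_,
    fun a c d h => ?_, fun a c d h => ?_, hbr⟩
  · simp only; rw [hs, pairInd_symm]
  · simp only
    rw [hl, zero_add]
    by_contra hne
    have hji : ((L : ℕ) : ZMod (2 * n)) ≠ ((0 : ℕ) : ZMod (2 * n)) := fun h => by
      have := natCast_inj_of_lt (by omega) (by omega) h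
      omega
    apply hji
    rcases pairInd_ne hne with ⟨h, h'⟩ | ⟨h, h'⟩ | ⟨h, h'⟩ | ⟨h, h'⟩ <;>
      rw [h, hj] at h' <;> push_cast
    · linear_combination -h'
    · linear_combination h'
    · linear_combination -h'
    · linear_combination h'
  · simp only
    rw [hd, zero_add]
    by_contra hne
    have hji : ((L : ℕ) : ZMod (2 * n)) ≠ ((n : ℕ) : ZMod (2 * n)) := fun h => by
      have := natCast_inj_of_lt (by omega) (by omega) h
      omega
    apply hji
    have h0 := nn_zero (n := n)
    rcases pairInd_ne hne with ⟨h, h'⟩ | ⟨h, h'⟩ | ⟨h, h'⟩ | ⟨h, h'⟩ <;>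
      rw [h, hj] at h'
    · linear_combination -h'
    · linear_combination h' - h0
    · linear_combination -h'
    · linear_combination h' - h0
  · simp only; rw [hant, pairInd_add]
  · simp only
    by_cases h1 : pairInd i j a b = 0
    · by_cases h2 : pairInd i j c d = 0
      · rw [h1, h2]; exact hcc a b c d h
      · left
        have := full _ _ _ _ h2 (crossE_symm h)
        rw [this.1, this.2]
    · right
      have := full _ _ _ _ h1 h
      rw [this.1, this.2]
  · simp only
    by_cases h2 : pairInd i j c d = 0
    · rw [h2]; exact hcb a c d h
    · left; exact (fullr _ _ _ h2 (crossE_symm h)).1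
  · simp only
    by_cases h2 : pairInd i j c d = 0
    · rw [h2]; exact hcr a c d h
    · left; exact (fullr _ _ _ h2 (crossE_symm h)).2

theorem vertInd_le {A : ZMod (2 * n) → ℕ} (hA : ∀ a, A (a + (n : ZMod (2 * n))) = A a)
    {i : ZMod (2 * n)} (h : A i ≠ 0) (v : ZMod (2 * n)) : vertInd i v ≤ A v := by
  unfold vertInd
  split_ifs with hv
  · rcases hv with rfl | rfl
    · omega
    · rw [hA]; omega
  · exact Nat.zero_le _

theorem vertInd_self (i : ZMod (2 * n)) : vertInd i i = 1 := by
  unfold vertInd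
  rw [if_pos (Or.inl rfl)]

/-- A D-multidissection is determined by, and can be reconstructed from, the numbers of arc
starts (with blue radii) and arc ends (with red radii) at each vertex. -/
theorem exists_unique_of_weights [NeZero (2 * n)] (s : ℕ) :
    ∀ A B : ZMod (2 * n) → ℕ, (∀ a, A (a + (n : ZMod (2 * n))) = A a) →
      (∀ a, B (a + (n : ZMod (2 * n))) = B a) → ∑ a, A a = s →
      ∃ F : DTriple n, (IsDMulti n F ∧ outW F = A ∧ inW F = B) ∧
        ∀ G : DTriple n, IsDMulti n G → outW G = A → inW G = B → G = F := by
  induction s using Nat.strong_induction_on with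
  | _ s ih =>
    intro A B hA hB hsum
    by_cases hex : ∃ L, (0 < L ∧ L < n) ∧ ∃ i, A i ≠ 0 ∧ B (i + (L : ZMod (2 * n))) ≠ 0
    · classical
      -- A closest pair of a start and a later end must be joined by an edge; minimality of `L`
      -- means that `A` and `B` vanish strictly between its endpoints.
      obtain ⟨⟨hL, hLn⟩, i, hAi, hBj⟩ := Nat.find_spec hex
      have hmin := fun m => Nat.find_min hex (m := m)
      set L := Nat.find hex with hLdef
      clear_value L
      have hbo : ∀ t, 0 < t → t < L → A (i + (t : ZMod (2 * n))) = 0 := by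
        intro t ht htL
        by_contra hne
        refine hmin (L - t) (by omega) ⟨⟨by omega, by omega⟩, _, hne, ?_⟩
        rw [Nat.cast_sub htL.le]
        convert hBj using 2
        ring
      have hbi : ∀ t, 0 < t → t < L → B (i + (t : ZMod (2 * n))) = 0 := by
        intro t ht htL
        by_contra hne
        exact hmin t htL ⟨⟨ht, by omega⟩, i, hAi, hne⟩
      have hLm : L ∈ Finset.Ioo 0 n := Finset.mem_Ioo.2 ⟨hL, hLn⟩
      have hAle := vertInd_le hA hAi
      have hBle := vertInd_le hB hBj
      have hlt : ∑ a, (A a - vertInd i a) < s := by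
        rw [← hsum]
        apply Finset.sum_lt_sum (fun a _ => Nat.sub_le _ _)
        refine ⟨i, Finset.mem_univ _, ?_⟩
        rw [vertInd_self]; omega
      obtain ⟨F, ⟨hF, hFo, hFi⟩, huniq⟩ := ih _ hlt (fun a => A a - vertInd i a)
        (fun a => B a - vertInd (i + (L : ZMod (2 * n))) a)
        (fun a => by rw [hA, vertInd_add]) (fun a => by rw [hB, vertInd_add])
        rfl
      refine ⟨addPair F i (i + (L : ZMod (2 * n))), ⟨isDMulti_addPair hF hL hLn ?_ ?_, ?_, ?_⟩, ?_⟩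
      · intro t ht htL
        rw [hFo]; simp only; rw [hbo t ht htL, Nat.zero_sub]
      · intro t ht htL
        rw [hFi]; simp only; rw [hbi t ht htL, Nat.zero_sub]
      · funext v
        rw [outW_addPair F i v hLm, hFo]
        exact Nat.sub_add_cancel (hAle v)
      · funext v
        rw [inW_addPair F i v hLm, hFi]
        exact Nat.sub_add_cancel (hBle v)
      · intro G hG hGo hGi
        have hE := forced_edge hG hL hLn (i := i) (by rwa [hGo]) (by rwa [hGi])
          (by rw [hGo]; exact hbo) (by rw [hGi]; exact hbi)
        have hre := addPair_subPair hG hE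
        rw [← huniq (subPair G i (i + (L : ZMod (2 * n)))) (isDMulti_subPair hG _ _) ?_ ?_, hre]
        · funext v
          have := outW_addPair (subPair G i (i + (L : ZMod (2 * n)))) i v hLm
          rw [hre, hGo] at this
          omega
        · funext v
          have := inW_addPair (subPair G i (i + (L : ZMod (2 * n)))) i v hLm
          rw [hre, hGi] at this
          omega
    · push Not at hex
      -- No start is followed by an end within a half turn, so there are diameters only.
      have hno : ∀ l ∈ Finset.Ioo 0 n, ∀ i, A i ≠ 0 → B (i + ((l : ℕ) : ZMod (2 * n))) = 0 :=
        fun l hl i hi => hex l (Finset.mem_Ioo.1 hl) i hi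
      refine ⟨(fun _ _ => 0, A, B), ⟨⟨fun _ _ => rfl, fun _ => rfl, fun _ => rfl, fun _ _ => rfl,
        hA, hB, fun _ _ _ _ _ => Or.inl rfl, fun _ _ _ _ => Or.inr rfl,
        fun _ _ _ _ => Or.inr rfl, ?_⟩, ?_, ?_⟩, ?_⟩
      · intro a b ha hb
        rcases offset_cases a b with h | h | ⟨l, hl, h⟩ | ⟨l, hl, h⟩
        · exact Or.inl h
        · exact Or.inr h
        · refine absurd (hno l hl a ha) ?_
          rwa [← h]
        · have hl' := Finset.mem_Ioo.1 hl
          refine absurd (hno (n - l) (Finset.mem_Ioo.2 ⟨by omega, by omega⟩) a ha) ?_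
          rw [Nat.cast_sub hl'.2.le, h, add_add_sub_cancel, hB]
          exact hb
      · funext v
        simp [outW]
      · funext v
        simp [inW]
      · intro G hG hGo hGi
        have hG1 : ∀ l ∈ Finset.Ioo 0 n, ∀ a, G.1 a (a + ((l : ℕ) : ZMod (2 * n))) = 0 := by
          intro l hl a
          by_contra hne
          refine inW_ne_of_arc hl hne ?_
          rw [hGi]
          apply hno l hl
          rw [← hGo]
          exact outW_ne_of_arc hl hne
        have hz : ∀ a b, G.1 a b = 0 := by
          intro a b
          obtain ⟨hs, hl, hd, -⟩ := hG
          rcases offset_cases a b with h | h | ⟨l, hl', h⟩ | ⟨l, hl', h⟩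
          · rw [h, hl]
          · rw [h, hd]
          · rw [h, hG1 l hl']
          · rw [hs, h, hG1 l hl']
        refine Prod.ext (by funext a b; exact hz a b) (Prod.ext ?_ ?_)
        · rw [← hGo]; funext v; simp [outW, hz]
        · rw [← hGi]; funext v; simp [inW, hz]

/-! ### Rotation, colors and the number of edges -/

/-- Rotation by `c` vertex positions, without interchanging the colors. -/
def rotP (c : ZMod (2 * n)) (F : DTriple n) : DTriple n :=
  (fun i j => F.1 (i + c) (j + c), fun a => F.2.1 (a + c), fun a => F.2.2 (a + c))

theorem outW_rotP (c : ZMod (2 * n)) (F : DTriple n) (v : ZMod (2 * n)) :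
    outW (rotP c F) v = outW F (v + c) := by
  unfold outW rotP
  simp only [add_right_comm v _ c]

theorem inW_rotP (c : ZMod (2 * n)) (F : DTriple n) (v : ZMod (2 * n)) :
    inW (rotP c F) v = inW F (v + c) := by
  unfold inW rotP
  simp only [sub_add_eq_add_sub]

theorem isDMulti_rotP [NeZero (2 * n)] {F : DTriple n} (hF : IsDMulti n F) (c : ZMod (2 * n)) :
    IsDMulti n (rotP c F) := by
  obtain ⟨hs, hl, hd, hant, hb, hr, hcc, hcb, hcr, hbr⟩ := hF
  have hcomm : ∀ a : ZMod (2 * n), a + (n : ZMod (2 * n)) + c = a + c + n :=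
    fun a => add_right_comm a _ c
  unfold rotP
  refine ⟨fun a b => hs _ _, fun a => hl _, fun a => ?_, fun a b => ?_, fun a => ?_, fun a => ?_,
    fun i j a b h => hcc _ _ _ _ ((crossE_add c i j a b).2 h), fun a i j h => ?_,
    fun a i j h => ?_, fun a b ha hb' => ?_⟩
  · simp only [hcomm, hd]
  · simp only [hcomm, hant]
  · simp only [hcomm, hb]
  · simp only [hcomm, hr]
  · refine hcb _ _ _ ?_
    rw [← hcomm, crossE_add]; exact h
  · refine hcr _ _ _ ?_
    rw [← hcomm, crossE_add]; exact h
  · rcases hbr _ _ ha hb' with h | h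
    · left; exact add_right_cancel h
    · right
      rw [← hcomm] at h
      exact add_right_cancel h

theorem outW_add_nn {F : DTriple n} (hF : IsDMulti n F) (v : ZMod (2 * n)) :
    outW F (v + (n : ZMod (2 * n))) = outW F v := by
  obtain ⟨hs, hl, hd, hant, hb, hr, -⟩ := hF
  unfold outW
  simp only [add_right_comm v (n : ZMod (2 * n)), hant, hb]

theorem inW_add_nn {F : DTriple n} (hF : IsDMulti n F) (v : ZMod (2 * n)) :
    inW F (v + (n : ZMod (2 * n))) = inW F v := by
  obtain ⟨hs, hl, hd, hant, hb, hr, -⟩ := hF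
  unfold inW
  simp only [add_sub_right_comm v (n : ZMod (2 * n)), hant, hr]

/-- A D-multidissection is determined by its vertex weights. -/
theorem eq_of_weights [NeZero (2 * n)] {F G : DTriple n} (hF : IsDMulti n F) (hG : IsDMulti n G)
    (ho : outW G = outW F) (hi : inW G = inW F) : G = F := by
  obtain ⟨H, -, h⟩ := exists_unique_of_weights _ (outW F) (inW F) (outW_add_nn hF)
    (inW_add_nn hF) rfl
  rw [h F hF rfl rfl, h G hG ho hi]

/-- Rotational symmetry is visible on the vertex weights. -/
theorem rotP_eq_self_iff [NeZero (2 * n)] {F : DTriple n} (hF : IsDMulti n F) (d : ℕ) :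
    rotP (d : ZMod (2 * n)) F = F ↔ Per n d (outW F) ∧ Per n d (inW F) := by
  constructor
  · intro h
    refine ⟨⟨outW_add_nn hF, fun a => ?_⟩, ⟨inW_add_nn hF, fun a => ?_⟩⟩
    · rw [← outW_rotP, h]
    · rw [← inW_rotP, h]
  · rintro ⟨⟨-, ho⟩, ⟨-, hi⟩⟩
    apply eq_of_weights hF (isDMulti_rotP hF _)
    · funext v; rw [outW_rotP, ho]
    · funext v; rw [inW_rotP, hi]

theorem rotP_eq_self_iff' (F : DTriple n) (d : ℕ) :
    rotP (d : ZMod (2 * n)) F = F ↔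
      (∀ i j, F.1 (i + (d : ZMod (2*n))) (j + (d : ZMod (2*n))) = F.1 i j) ∧
      (∀ a, F.2.1 (a + (d : ZMod (2*n))) = F.2.1 a) ∧
      (∀ a, F.2.2 (a + (d : ZMod (2*n))) = F.2.2 a) := by
  constructor
  · intro h
    refine ⟨fun i j => ?_, fun a => ?_, fun a => ?_⟩
    · exact congrFun (congrFun (congrArg Prod.fst h) i) j
    · exact congrFun (congrArg (fun G : DTriple n => G.2.1) h) a
    · exact congrFun (congrArg (fun G : DTriple n => G.2.2) h) a
  · rintro ⟨h1, h2, h3⟩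
    exact Prod.ext (by funext i j; exact h1 i j)
      (Prod.ext (by funext a; exact h2 a) (by funext a; exact h3 a))

theorem dFixed_even [NeZero (2 * n)] {F : DTriple n} (hF : IsDMulti n F) {d : ℕ}
    (hd : d % 2 = 0) : DFixed n d F ↔ Per n d (outW F) ∧ Per n d (inW F) := by
  rw [← rotP_eq_self_iff hF, rotP_eq_self_iff']
  unfold DFixed
  simp only [hd, if_true]

/-- Under a color-exchanging symmetry every blue diameter has a red image, which must be the same
diameter; so the two color classes agree, and the colors may be ignored. -/
theorem dFixed_odd_aux {F : DTriple n} (hF : IsDMulti n F) {d : ℕ}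
    (hd : d % 2 = 1) :
    DFixed n d F ↔ rotP (d : ZMod (2 * n)) F = F ∧ F.2.1 = F.2.2 := by
  rw [rotP_eq_self_iff']
  unfold DFixed
  rw [hd]
  simp only [one_ne_zero, if_false]
  constructor
  · rintro ⟨h1, h2, h3⟩
    obtain ⟨-, -, -, -, hb, hr, -, -, -, hbr⟩ := hF
    have key : F.2.1 = F.2.2 := by
      funext i
      by_cases hi : F.2.1 i = 0
      · rw [hi]
        by_contra hne
        have h' : F.2.1 (i + (d : ZMod (2 * n))) ≠ 0 := by rw [h2]; exact Ne.symm hne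
        rcases hbr _ _ h' (Ne.symm hne) with h | h
        · rw [← h, hi] at h'; exact h' rfl
        · rw [← hb, ← h, hi] at h'; exact h' rfl
      · have h' : F.2.2 (i + (d : ZMod (2 * n))) ≠ 0 := by rw [h3]; exact hi
        rcases hbr _ _ hi h' with h | h
        · rw [← h3, h]
        · rw [← h3, h, hr]
    exact ⟨⟨h1, fun a => by rw [h2, key], fun a => by rw [h3, key]⟩, key⟩
  · rintro ⟨⟨h1, h2, h3⟩, key⟩
    exact ⟨h1, fun a => by rw [h2, key], fun a => by rw [h3, key]⟩

theorem sum_out_arcs [NeZero (2 * n)] (F : DTriple n) :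
    ∑ v, ∑ l ∈ Finset.Ioo 0 n, F.1 (v - ((l : ℕ) : ZMod (2 * n))) v =
      ∑ v, ∑ l ∈ Finset.Ioo 0 n, F.1 v (v + ((l : ℕ) : ZMod (2 * n))) := by
  rw [Finset.sum_comm]
  conv_rhs => rw [Finset.sum_comm]
  refine Finset.sum_congr rfl fun l _ => ?_
  rw [← Equiv.sum_comp (Equiv.addRight ((l : ℕ) : ZMod (2 * n)))]
  simp

/-- Arcs contribute equally to starts and ends, so the two total weights differ by the difference
of the numbers of blue and red radii. If these numbers agree and are not zero, then noncrossing
leaves only one diameter, hence the two color classes agree. -/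
theorem blue_eq_red_iff [NeZero (2 * n)] {F : DTriple n} (hF : IsDMulti n F) :
    F.2.1 = F.2.2 ↔ ∑ v, outW F v = ∑ v, inW F v := by
  unfold outW inW
  rw [Finset.sum_add_distrib, Finset.sum_add_distrib, sum_out_arcs, add_left_inj]
  constructor
  · intro h; rw [h]
  · intro h
    obtain ⟨-, -, -, -, hb, hr, -, -, -, hbr⟩ := hF
    by_cases hz : ∃ i, F.2.1 i ≠ 0
    · obtain ⟨i, hi⟩ := hz
      -- Every red diameter coincides with each blue one, so a single diameter carries both colors.
      have hred : ∀ v, F.2.2 v = F.2.2 i * vertInd i v := by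
        intro v
        unfold vertInd
        split_ifs with hv
        · rcases hv with rfl | rfl
          · rw [mul_one]
          · rw [mul_one, hr]
        · by_contra hne
          exact hv (hbr i v hi (by rwa [mul_zero] at hne))
      have hri : F.2.2 i ≠ 0 := by
        intro h0
        have : ∑ v, F.2.2 v = 0 := Finset.sum_eq_zero fun v _ => by rw [hred, h0, zero_mul]
        rw [this] at h
        exact hi (Finset.sum_eq_zero_iff.1 h i (Finset.mem_univ _))
      have hblue : ∀ v, F.2.1 v = F.2.1 i * vertInd i v := by
        intro v
        unfold vertInd
        split_ifs with hv
        · rcases hv with rfl | rfl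
          · rw [mul_one]
          · rw [mul_one, hb]
        · by_contra hne
          rw [mul_zero] at hne
          rcases hbr v i hne hri with h | h
          · exact hv (Or.inl h.symm)
          · exact hv (Or.inr (by rw [h, add_nn]))
      rw [Finset.sum_congr rfl (fun v _ => hred v), Finset.sum_congr rfl (fun v _ => hblue v),
        ← Finset.mul_sum, ← Finset.mul_sum] at h
      have hpos : 0 < ∑ v, vertInd i v :=
        Finset.sum_pos' (fun _ _ => Nat.zero_le _)
          ⟨i, Finset.mem_univ _, by rw [vertInd_self]; exact Nat.one_pos⟩
      have := Nat.eq_of_mul_eq_mul_right hpos h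
      funext v
      rw [hred, hblue, this]
    · push Not at hz
      rw [Finset.sum_eq_zero (fun v _ => hz v)] at h
      funext v
      rw [hz, Finset.sum_eq_zero_iff.1 h.symm v (Finset.mem_univ _)]

theorem dFixed_odd [NeZero (2 * n)] {F : DTriple n} (hF : IsDMulti n F) {d : ℕ}
    (hd : d % 2 = 1) : DFixed n d F ↔
      (Per n d (outW F) ∧ Per n d (inW F)) ∧ ∑ v, outW F v = ∑ v, inW F v := by
  rw [dFixed_odd_aux hF hd, rotP_eq_self_iff hF, blue_eq_red_iff hF]

theorem sum_range_double {M : Type*} [AddCommMonoid M] (f : ℕ → M) :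
    ∑ v ∈ Finset.range (2 * n), f v =
      ∑ v ∈ Finset.range n, f v + ∑ v ∈ Finset.range n, f (n + v) := by
  rw [two_mul, Finset.sum_range_add]

theorem sum_radii [NeZero (2 * n)] {f : ZMod (2 * n) → ℕ}
    (hf : ∀ a, f (a + (n : ZMod (2 * n))) = f a) :
    ∑ a, f a = 2 * ∑ a ∈ Finset.range n, f (a : ZMod (2 * n)) := by
  rw [sum_zmod, sum_range_double, two_mul (∑ a ∈ Finset.range n, _)]
  congr 1
  refine Finset.sum_congr rfl fun a _ => ?_
  rw [Nat.cast_add, add_comm, hf]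

theorem sum_lt_of_symm (N : ℕ) (g : ℕ → ℕ → ℕ) (hs : ∀ i j, g i j = g j i) (hz : ∀ i, g i i = 0) :
    ∑ i ∈ Finset.range N, ∑ j ∈ Finset.range N, g i j =
      2 * ∑ i ∈ Finset.range N, ∑ j ∈ Finset.range N, if i < j then g i j else 0 := by
  have e : ∑ i ∈ Finset.range N, ∑ j ∈ Finset.range N, (if i < j then g i j else 0) =
      ∑ i ∈ Finset.range N, ∑ j ∈ Finset.range N, (if j < i then g i j else 0) := by
    rw [Finset.sum_comm]
    refine Finset.sum_congr rfl fun i _ => Finset.sum_congr rfl fun j _ => ?_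
    rw [hs]
  rw [two_mul]
  nth_rewrite 2 [e]
  rw [← Finset.sum_add_distrib]
  refine Finset.sum_congr rfl fun i _ => ?_
  rw [← Finset.sum_add_distrib]
  refine Finset.sum_congr rfl fun j _ => ?_
  rcases lt_trichotomy i j with h | h | h
  · simp [h, h.not_gt]
  · subst h; simp [hz]
  · simp [h, h.not_gt]

/-- Edges at `a` are the arcs starting at `a` and the arcs ending at `a`. -/
theorem sum_row [NeZero (2 * n)] {F : DTriple n} (hF : IsDMulti n F) (a : ZMod (2 * n)) :
    ∑ b, F.1 a b = ∑ l ∈ Finset.Ioo 0 n, F.1 a (a + ((l : ℕ) : ZMod (2 * n))) +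
      ∑ l ∈ Finset.Ioo 0 n, F.1 (a - ((l : ℕ) : ZMod (2 * n))) a := by
  have hn : 0 < n := by have := NeZero.ne (2 * n); omega
  obtain ⟨hs, hl, hd, -⟩ := hF
  rw [← Equiv.sum_comp (Equiv.addLeft a), sum_zmod, sum_range_double]
  simp only [Equiv.coe_addLeft]
  have h0 : Finset.range n = insert 0 (Finset.Ioo 0 n) := by
    ext x; simp; omega
  rw [h0, Finset.sum_insert (by simp), Finset.sum_insert (by simp)]
  simp only [Nat.cast_zero, add_zero, hl, hd, zero_add]
  congr 1
  -- A clockwise distance `n + l` from `a` is a counterclockwise distance `n - l`.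
  refine Finset.sum_nbij' (fun l => n - l) (fun l => n - l) ?_ ?_ ?_ ?_ ?_
  · intro l h; simp at h ⊢; omega
  · intro l h; simp at h ⊢; omega
  · intro l h; simp at h ⊢; omega
  · intro l h; simp at h ⊢; omega
  · intro l h
    have h := Finset.mem_Ioo.1 h
    rw [hs, Nat.cast_sub h.2.le, Nat.cast_add]
    have e : a + ((n : ZMod (2 * n)) + (l : ZMod (2 * n))) = a - ((n : ZMod (2 * n)) - l) := by
      linear_combination nn_zero (n := n)
    rw [e]

/-- Every arc contributes one start and one end, and a radius is half of a diameter. -/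
theorem two_mul_dEdges [NeZero (2 * n)] {F : DTriple n} (hF : IsDMulti n F) :
    ∑ v, outW F v + ∑ v, inW F v = 2 * dEdges n F := by
  have hF' := hF
  obtain ⟨hs, hl, -, -, hb, hr, -⟩ := hF'
  have h1 := sum_lt_of_symm (2 * n)
    (fun i j => F.1 (i : ZMod (2 * n)) (j : ZMod (2 * n))) (fun i j => hs _ _) (fun i => hl _)
  have h2 : ∑ a, ∑ b, F.1 a b = ∑ i ∈ Finset.range (2 * n), ∑ j ∈ Finset.range (2 * n),
      F.1 (i : ZMod (2 * n)) (j : ZMod (2 * n)) := by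
    rw [sum_zmod]
    exact Finset.sum_congr rfl fun i _ => sum_zmod _
  rw [Finset.sum_congr rfl (fun a _ => sum_row hF a), Finset.sum_add_distrib, h1] at h2
  unfold outW inW dEdges
  rw [Finset.sum_add_distrib, Finset.sum_add_distrib, sum_radii hb, sum_radii hr,
    Finset.sum_add_distrib]
  omega

/-- D-multidissections correspond to pairs of antipodally invariant vertex weights. -/
noncomputable def weightEquiv [NeZero (2 * n)] (P : DTriple n → Prop)
    (Q : (ZMod (2 * n) → ℕ) → (ZMod (2 * n) → ℕ) → Prop)
    (hQ : ∀ A B, Q A B → (∀ a, A (a + (n : ZMod (2 * n))) = A a) ∧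
      ∀ a, B (a + (n : ZMod (2 * n))) = B a)
    (hPQ : ∀ F, IsDMulti n F → (P F ↔ Q (outW F) (inW F))) :
    {F : DTriple n // IsDMulti n F ∧ P F} ≃
      {p : (ZMod (2 * n) → ℕ) × (ZMod (2 * n) → ℕ) // Q p.1 p.2} :=
  Equiv.ofBijective (fun F => ⟨(outW F.1, inW F.1), (hPQ _ F.2.1).1 F.2.2⟩) <| by
    constructor
    · rintro ⟨F, hF, hP⟩ ⟨G, hG, hP'⟩ h
      simp only [Subtype.mk.injEq, Prod.mk.injEq] at h
      exact Subtype.ext (eq_of_weights hG hF h.1 h.2)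
    · rintro ⟨⟨A, B⟩, h⟩
      obtain ⟨hA, hB⟩ := hQ _ _ h
      obtain ⟨F, ⟨hF, ho, hi⟩, -⟩ := exists_unique_of_weights _ A B hA hB rfl
      refine ⟨⟨F, hF, (hPQ _ hF).2 ?_⟩, ?_⟩
      · rw [ho, hi]; exact h
      · simp only [ho, hi]

end Geometry

/-! ### Counting pairs of invariant multisets -/

theorem Per.even_sum {n d : ℕ} [NeZero (2 * n)] {A : ZMod (2 * n) → ℕ} (h : Per n d A) :
    2 ∣ ∑ a, A a := by
  rw [h.sum, mul_assoc]
  exact Dvd.intro _ rfl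

/-- Rotation-invariant multisets of size `m` on `ZMod n`. -/
abbrev PerSum (n d m : ℕ) [NeZero (2 * n)] :=
  {A : ZMod (2 * n) → ℕ // Per n d A ∧ ∑ a, A a = 2 * m}

instance (n d m : ℕ) [NeZero (2 * n)] : Finite (PerSum n d m) := by
  have : Finite (Set.Iic (fun _ : ZMod (2 * n) => 2 * m)) := (Set.finite_Iic _).to_subtype
  refine Finite.of_injective
    (fun A : PerSum n d m => (⟨A.1, fun a => ?_⟩ : Set.Iic (fun _ : ZMod (2 * n) => 2 * m))) ?_
  · exact (Finset.single_le_sum (f := A.1) (fun _ _ => Nat.zero_le _) (Finset.mem_univ a)).trans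
      A.2.2.le
  · intro A B h
    exact Subtype.ext (Subtype.mk.inj h)

/-- Pairs of invariant multisets of total size `k`, sorted by their two sizes. -/
def pairsEquiv (n d k : ℕ) [NeZero (2 * n)] :
    {p : (ZMod (2 * n) → ℕ) × (ZMod (2 * n) → ℕ) //
      (Per n d p.1 ∧ Per n d p.2) ∧ ∑ v, p.1 v + ∑ v, p.2 v = 2 * k} ≃
    Σ s : HasAntidiagonal.antidiagonal k, PerSum n d s.1.1 × PerSum n d s.1.2 where
  toFun p := ⟨⟨((∑ v, p.1.1 v) / 2, (∑ v, p.1.2 v) / 2), by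
      have h1 := p.2.1.1.even_sum
      have h2 := p.2.1.2.even_sum
      have h3 := p.2.2
      rw [HasAntidiagonal.mem_antidiagonal]
      dsimp only
      omega⟩,
    ⟨p.1.1, p.2.1.1, by have h1 := p.2.1.1.even_sum; dsimp only; omega⟩,
    ⟨p.1.2, p.2.1.2, by have h1 := p.2.1.2.even_sum; dsimp only; omega⟩⟩
  invFun s := ⟨(s.2.1.1, s.2.2.1), ⟨s.2.1.2.1, s.2.2.2.1⟩, by
    have h := HasAntidiagonal.mem_antidiagonal.1 s.1.2
    have h1 := s.2.1.2.2
    have h2 := s.2.2.2.2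
    dsimp only
    omega⟩
  left_inv p := rfl
  right_inv := by
    rintro ⟨⟨⟨a, b⟩, hs⟩, ⟨A, hA, hA'⟩, ⟨B, hB, hB'⟩⟩
    dsimp only at hA' hB'
    have e1 : a = (∑ v, A v) / 2 := by omega
    have e2 : b = (∑ v, B v) / 2 := by omega
    subst e1 e2
    rfl

theorem card_pairs_even (n d k : ℕ) (hn : 0 < n) [NeZero (2 * n)] :
    (Nat.card {p : (ZMod (2 * n) → ℕ) × (ZMod (2 * n) → ℕ) //
      (Per n d p.1 ∧ Per n d p.2) ∧ ∑ v, p.1 v + ∑ v, p.2 v = 2 * k} : ℂ) =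
    ∑ p ∈ HasAntidiagonal.antidiagonal k,
      hh n p.1 (fun i : Fin n => (Complex.exp (Real.pi * Complex.I / n) ^ d) ^ (2 * (i : ℕ))) *
      hh n p.2 (fun i : Fin n => (Complex.exp (Real.pi * Complex.I / n) ^ d) ^ (2 * (i : ℕ))) := by
  rw [Nat.card_congr (pairsEquiv n d k), Nat.card_sigma, Nat.cast_sum,
    ← Finset.sum_coe_sort (HasAntidiagonal.antidiagonal k)]
  refine Finset.sum_congr rfl fun s _ => ?_
  rw [Nat.card_prod, Nat.cast_mul, card_per n d _ hn, card_per n d _ hn]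

/-- Two invariant multisets of equal size and total size `k` exist only for even `k`. -/
theorem card_pairs_odd (n d k : ℕ) (hn : 0 < n) [NeZero (2 * n)] :
    (Nat.card {p : (ZMod (2 * n) → ℕ) × (ZMod (2 * n) → ℕ) //
      ((Per n d p.1 ∧ Per n d p.2) ∧ ∑ v, p.1 v = ∑ v, p.2 v) ∧
        ∑ v, p.1 v + ∑ v, p.2 v = 2 * k} : ℂ) =
    if Even k then
      hh n (k / 2) (fun i : Fin n =>
        (Complex.exp (Real.pi * Complex.I / n) ^ d) ^ (2 * (i : ℕ))) *
      hh n (k / 2) (fun i : Fin n =>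
        (Complex.exp (Real.pi * Complex.I / n) ^ d) ^ (2 * (i : ℕ)))
    else 0 := by
  split_ifs with hk
  · have h2 : 2 * (k / 2) = k := Nat.two_mul_div_two_of_even hk
    rw [← card_per n d _ hn, ← Nat.cast_mul, ← Nat.card_prod]
    congr 1
    exact Nat.card_congr
      { toFun := fun p => (⟨p.1.1, p.2.1.1.1, by have h := p.2.1.2; have h' := p.2.2; omega⟩,
          ⟨p.1.2, p.2.1.1.2, by have h := p.2.1.2; have h' := p.2.2; omega⟩)
        invFun := fun s => ⟨(s.1.1, s.2.1), ⟨⟨s.1.2.1, s.2.2.1⟩, s.1.2.2.trans s.2.2.2.symm⟩, by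
          have h := s.1.2.2
          have h' := s.2.2.2
          dsimp only
          omega⟩
        left_inv := fun _ => rfl
        right_inv := fun _ => rfl }
  · have : IsEmpty {p : (ZMod (2 * n) → ℕ) × (ZMod (2 * n) → ℕ) //
      ((Per n d p.1 ∧ Per n d p.2) ∧ ∑ v, p.1 v = ∑ v, p.2 v) ∧
        ∑ v, p.1 v + ∑ v, p.2 v = 2 * k} := by
      constructor
      rintro ⟨p, ⟨⟨hA, hB⟩, h⟩, h'⟩
      have := hA.even_sum
      exact hk (even_iff_two_dvd.2 (by omega))
    rw [Nat.card_of_isEmpty, Nat.cast_zero]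

/-- Theorem 4.6.  Let `n ≥ 2` and `k ≥ 0`.  The set of
D-multidissections of `P_{2n}` with exactly `k` edges, with `Z_{2n}` acting by
D-rotation, and `X(q) = Σ_{ℓ=0}^{⌊k/2⌋} s_{(k−ℓ,ℓ)}(1,q²,…,q^{2(n−1)})·h_{k−2ℓ}(1,qⁿ)`,
exhibits the cyclic sieving phenomenon: for every `d ≥ 0` the number of elements fixed
by the `d`-th power of D-rotation equals `X(ζ^d)` with `ζ = e^{πi/n}`. -/
theorem statement19 (n k : ℕ) (hn : 2 ≤ n) :
    ∀ d : ℕ,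
      (Nat.card {F : DTriple n // IsDMulti n F ∧ dEdges n F = k ∧ DFixed n d F} : ℂ) =
        ∑ l ∈ Finset.range (k / 2 + 1),
          schur2 n (k - l) l
              (fun i : Fin n =>
                (Complex.exp (Real.pi * Complex.I / n) ^ d) ^ (2 * (i : ℕ))) *
            hh 2 (k - 2 * l)
              (fun j : Fin 2 =>
                (Complex.exp (Real.pi * Complex.I / n) ^ d) ^ (n * (j : ℕ))) := by
  intro d
  have hn0 : 0 < n := by omega
  have : NeZero (2 * n) := ⟨by omega⟩
  -- At `q = ζ^d` the second variable `q^n` equals `(-1)^d`.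
  have hζ : Complex.exp (Real.pi * Complex.I / n) ^ n = -1 := by
    rw [← Complex.exp_nat_mul, mul_div_cancel₀ _ (by exact_mod_cast hn0.ne'), Complex.exp_pi_mul_I]
  have hy : (Complex.exp (Real.pi * Complex.I / n) ^ d) ^ (n * ((1 : Fin 2) : ℕ)) = (-1) ^ d := by
    rw [← pow_mul, mul_comm d, pow_mul, Fin.val_one, mul_one, hζ]
  rcases Nat.mod_two_eq_zero_or_one d with hd | hd
  · rw [sieve_even n k _ _ (by simp)
      (by rw [hy, Even.neg_one_pow (Nat.even_iff.2 hd)]), ← card_pairs_even n d k hn0]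
    congr 1
    refine Nat.card_congr (weightEquiv _
      (fun A B => (Per n d A ∧ Per n d B) ∧ ∑ v, A v + ∑ v, B v = 2 * k)
      (fun A B h => ⟨h.1.1.1, h.1.2.1⟩) fun F hF => ?_)
    rw [dFixed_even hF hd, two_mul_dEdges hF, and_comm, Nat.mul_right_inj two_ne_zero]
  · rw [sieve_odd n k _ _ (by simp)
      (by rw [hy, Odd.neg_one_pow (Nat.odd_iff.2 hd)]), ← card_pairs_odd n d k hn0]
    congr 1
    refine Nat.card_congr (weightEquiv _
      (fun A B => ((Per n d A ∧ Per n d B) ∧ ∑ v, A v = ∑ v, B v) ∧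
        ∑ v, A v + ∑ v, B v = 2 * k)
      (fun A B h => ⟨h.1.1.1.1, h.1.1.2.1⟩) fun F hF => ?_)
    rw [dFixed_odd hF hd, two_mul_dEdges hF, and_comm, Nat.mul_right_inj two_ne_zero]
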